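/- arXiv:1612.08476 — 5 statements merged into one kernel-verified Lean document; each statement's English description precedes it below -/
import Mathlib

section
/- Let E and F be C*-ternary rings and π : E → F a homomorphism of the underlying *-trings. Then π is contractive, i.e., ‖π(x)‖ ≤ ‖x‖ for all x ∈ E, and π is isometric if and only if it is injective. -/
noncomputable section

open scoped ComplexConjugate

/-- The axioms of a `*`-ternary ring (`*`-tring) structure on a complex vector
space: `μ` is linear in the odd variables, conjugate-linear in the middle one,
and satisfies the ternary associativity identities. -/
def IsTernaryProduct {E : Type*} [AddCommGroup E] [Module ℂ E]
    (μ : E → E → E → E) : Prop :=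
  (∀ x x' y z : E, μ (x + x') y z = μ x y z + μ x' y z) ∧
  (∀ (c : ℂ) (x y z : E), μ (c • x) y z = c • μ x y z) ∧
  (∀ x y y' z : E, μ x (y + y') z = μ x y z + μ x y' z) ∧
  (∀ (c : ℂ) (x y z : E), μ x (c • y) z = conj c • μ x y z) ∧
  (∀ x y z z' : E, μ x y (z + z') = μ x y z + μ x y z') ∧
  (∀ (c : ℂ) (x y z : E), μ x y (c • z) = c • μ x y z) ∧
  (∀ x y z u v : E, μ (μ x y z) u v = μ x (μ u z y) v) ∧
  (∀ x y z u v : E, μ x (μ u z y) v = μ x y (μ z u v))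

/-- The norm of a Banach space `E` is a `C*`-norm for the ternary product `μ`,
making `E` a `C*`-ternary ring. -/
def IsCStarTringNorm {E : Type*} [NormedAddCommGroup E] [Module ℂ E]
    (μ : E → E → E → E) : Prop :=
  (∀ x y z : E, ‖μ x y z‖ ≤ ‖x‖ * ‖y‖ * ‖z‖) ∧ (∀ x : E, ‖μ x x x‖ = ‖x‖ ^ 3)


section TringAux

variable {E : Type*} [NormedAddCommGroup E] [NormedSpace ℂ E] {μ : E → E → E → E}

/-- left multiplication operator -/
def tLop (h : IsTernaryProduct μ) (hn : IsCStarTringNorm μ) (a b : E) : E →L[ℂ] E :=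
  LinearMap.mkContinuous
    { toFun := fun z => μ a b z
      map_add' := fun z z' => h.2.2.2.2.1 a b z z'
      map_smul' := fun c z => h.2.2.2.2.2.1 c a b z } (‖a‖ * ‖b‖) (fun z => hn.1 a b z)

@[simp] lemma tLop_apply (h : IsTernaryProduct μ) (hn : IsCStarTringNorm μ) (a b z : E) :
    tLop h hn a b z = μ a b z := rfl

lemma tLop_norm_le (h : IsTernaryProduct μ) (hn : IsCStarTringNorm μ) (a b : E) :
    ‖tLop h hn a b‖ ≤ ‖a‖ * ‖b‖ :=
  LinearMap.mkContinuous_norm_le _ (by positivity) _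

lemma tLop_norm_self (h : IsTernaryProduct μ) (hn : IsCStarTringNorm μ) (a : E) :
    ‖tLop h hn a a‖ = ‖a‖ ^ 2 := by
  apply le_antisymm
  · rw [sq]; exact tLop_norm_le h hn a a
  · rcases eq_or_ne a 0 with rfl | ha
    · simp
    · have h1 := (tLop h hn a a).le_opNorm a
      rw [tLop_apply, hn.2] at h1
      have : 0 < ‖a‖ := norm_pos_iff.2 ha
      nlinarith

/-- `T'` is an adjoint of `T`. -/
def TAdj (μ : E → E → E → E) (T T' : E →L[ℂ] E) : Prop :=
  (∀ x y z, μ (T x) y z = T (μ x y z)) ∧ (∀ x y z, μ (T' x) y z = T' (μ x y z)) ∧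
  (∀ x y z, μ x (T y) z = μ x y (T' z)) ∧ (∀ x y z, μ x (T' y) z = μ x y (T z))

lemma TAdj.tLop (h : IsTernaryProduct μ) (hn : IsCStarTringNorm μ) (a b : E) :
    TAdj μ (tLop h hn a b) (tLop h hn b a) := by
  have h7 := h.2.2.2.2.2.2.1
  have h8 := h.2.2.2.2.2.2.2
  refine ⟨fun x y z => ?_, fun x y z => ?_, fun x y z => ?_, fun x y z => ?_⟩ <;>
    simp only [tLop_apply]
  · rw [h7, h8]
  · rw [h7, h8]
  · rw [h8]
  · rw [h8]

lemma TAdj.add (h : IsTernaryProduct μ) {S S' T T' : E →L[ℂ] E} (hS : TAdj μ S S')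
    (hT : TAdj μ T T') : TAdj μ (S + T) (S' + T') := by
  obtain ⟨h1, -, h3, -, h5, -, -, -⟩ := h
  obtain ⟨a1, a2, a3, a4⟩ := hS
  obtain ⟨b1, b2, b3, b4⟩ := hT
  refine ⟨fun x y z => ?_, fun x y z => ?_, fun x y z => ?_, fun x y z => ?_⟩ <;>
    simp only [add_apply, h1, h3, h5, a1, a2, a3, a4, b1, b2, b3, b4]

lemma TAdj.smul (h : IsTernaryProduct μ) {T T' : E →L[ℂ] E} (c : ℂ)
    (hT : TAdj μ T T') : TAdj μ (c • T) (conj c • T') := by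
  obtain ⟨-, h2, -, h4, -, h6, -, -⟩ := h
  obtain ⟨b1, b2, b3, b4⟩ := hT
  refine ⟨fun x y z => ?_, fun x y z => ?_, fun x y z => ?_, fun x y z => ?_⟩ <;>
    simp [h2, h4, h6, b1, b2, b3, b4]

lemma TAdj.one : TAdj μ (1 : E →L[ℂ] E) 1 := by
  simp [TAdj]

lemma TAdj.mul {S S' T T' : E →L[ℂ] E} (hS : TAdj μ S S')
    (hT : TAdj μ T T') : TAdj μ (S * T) (T' * S') := by
  obtain ⟨a1, a2, a3, a4⟩ := hS
  obtain ⟨b1, b2, b3, b4⟩ := hT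
  refine ⟨fun x y z => ?_, fun x y z => ?_, fun x y z => ?_, fun x y z => ?_⟩ <;>
    simp [a1, a2, a3, a4, b1, b2, b3, b4]

lemma TAdj.pow {T : E →L[ℂ] E} (hT : TAdj μ T T) (n : ℕ) : TAdj μ (T ^ n) (T ^ n) := by
  induction n with
  | zero => simpa using TAdj.one
  | succ k ih =>
    have := ih.mul hT
    rwa [← pow_succ, ← pow_succ'] at this

lemma TAdj.aeval (h : IsTernaryProduct μ) {T : E →L[ℂ] E} (hT : TAdj μ T T) (p : Polynomial ℝ) :
    TAdj μ (Polynomial.aeval T (p.map Complex.ofRealHom))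
      (Polynomial.aeval T (p.map Complex.ofRealHom)) := by
  induction p using Polynomial.induction_on' with
  | add p q hp hq => simpa using hp.add h hq
  | monomial n c =>
    have := (hT.pow n).smul h (c : ℂ)
    rw [Complex.conj_ofReal] at this
    simpa [Polynomial.aeval_monomial, Algebra.algebraMap_eq_smul_one] using this

lemma TAdj.norm_sq_le (hn : IsCStarTringNorm μ) {T T' : E →L[ℂ] E} (hT : TAdj μ T T') :
    ‖T‖ ^ 2 ≤ ‖T' * T‖ := by
  have key : ∀ x, ‖T x‖ ^ 3 ≤ (‖T‖ * ‖T' * T‖) * ‖x‖ ^ 3 := fun x => by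
    rw [← hn.2, hT.1, hT.2.2.1]
    calc ‖T (μ x x (T' (T x)))‖ ≤ ‖T‖ * ‖μ x x (T' (T x))‖ := T.le_opNorm _
      _ ≤ ‖T‖ * (‖x‖ * ‖x‖ * ‖(T' * T) x‖) := by gcongr; exact hn.1 _ _ _
      _ ≤ ‖T‖ * (‖x‖ * ‖x‖ * (‖T' * T‖ * ‖x‖)) := by gcongr; exact (T' * T).le_opNorm _
      _ = _ := by ring
  rcases eq_or_lt_of_le (norm_nonneg T) with h0 | h0
  · rw [← h0]; simp
  by_contra! hlt
  have h3 : ‖T‖ * ‖T' * T‖ < ‖T‖ ^ 3 := by nlinarith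
  set c : ℝ := (‖T‖ * ‖T' * T‖) ^ ((3 : ℝ)⁻¹) with hc
  have hc0 : 0 ≤ c := by positivity
  have hc3 : c ^ 3 = ‖T‖ * ‖T' * T‖ := by
    rw [hc, ← Real.rpow_natCast, ← Real.rpow_mul (by positivity)]; norm_num
  have hle : ‖T‖ ≤ c := T.opNorm_le_bound hc0 fun x => by
    have := key x
    rw [← hc3, ← mul_pow] at this
    exact le_of_pow_le_pow_left₀ (by norm_num) (by positivity) this
  have := pow_le_pow_left₀ h0.le hle 3
  linarith

lemma TAdj.norm_sq_self (hn : IsCStarTringNorm μ) {T : E →L[ℂ] E} (hT : TAdj μ T T) :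
    ‖T ^ 2‖ = ‖T‖ ^ 2 := by
  apply le_antisymm
  · rw [sq, sq]; exact norm_mul_le _ _
  · rw [sq T]; exact hT.norm_sq_le hn

lemma TAdj.norm_pow (hn : IsCStarTringNorm μ) {T : E →L[ℂ] E} (hT : TAdj μ T T) (n : ℕ) :
    ‖T ^ 2 ^ n‖ = ‖T‖ ^ 2 ^ n := by
  induction n with
  | zero => simp
  | succ k ih => rw [pow_succ, pow_mul, (hT.pow _).norm_sq_self hn, ih, ← pow_mul]

lemma TAdj.specRadius [CompleteSpace E] (hn : IsCStarTringNorm μ) {a : E →L[ℂ] E}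
    (ha : TAdj μ a a) : spectralRadius ℂ a = ‖a‖₊ := by
  have hconst : Filter.Tendsto (fun _n : ℕ => (‖a‖₊ : ENNReal)) Filter.atTop _ :=
    tendsto_const_nhds
  refine tendsto_nhds_unique ?_ hconst
  convert!
    (spectrum.pow_nnnorm_pow_one_div_tendsto_nhds_spectralRadius a).comp
      (tendsto_pow_atTop_atTop_of_one_lt one_lt_two) using 1
  refine funext fun n => ?_
  have h1 : ‖a ^ 2 ^ n‖₊ = ‖a‖₊ ^ 2 ^ n := by
    apply NNReal.eq; simpa using ha.norm_pow hn n
  rw [Function.comp_apply, h1, ENNReal.coe_pow, ← ENNReal.rpow_natCast, ← ENNReal.rpow_mul]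
  simp

lemma TAdj.norm_le [CompleteSpace E] (hn : IsCStarTringNorm μ) {a : E →L[ℂ] E}
    (ha : TAdj μ a a) {M : ℝ} (hM : 0 ≤ M) (h : ∀ k ∈ spectrum ℂ a, ‖k‖ ≤ M) : ‖a‖ ≤ M := by
  lift M to NNReal using hM
  have h1 : spectralRadius ℂ a ≤ (M : ENNReal) := by
    refine iSup₂_le fun k hk => ?_
    exact_mod_cast h k hk
  rw [ha.specRadius hn] at h1
  exact_mod_cast h1

lemma spec_norm_le [CompleteSpace E] (a : E →L[ℂ] E) {k : ℂ} (hk : k ∈ spectrum ℂ a) :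
    ‖k‖ ≤ ‖a‖ := by
  refine (spectrum.norm_le_norm_mul_of_mem hk).trans ?_
  have : ‖(1 : E →L[ℂ] E)‖ ≤ 1 := ContinuousLinearMap.norm_id_le
  nlinarith [norm_nonneg a]

lemma TAdj.spec_real [CompleteSpace E] (h : IsTernaryProduct μ) (hn : IsCStarTringNorm μ)
    {a : E →L[ℂ] E} (ha : TAdj μ a a) {k : ℂ} (hk : k ∈ spectrum ℂ a) : k.im = 0 := by
  have key : ∀ r : ℝ, k.re ^ 2 + (k.im + r) ^ 2 ≤ ‖a‖ ^ 2 + r ^ 2 := fun r => by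
    have h1 : k + (r * Complex.I) ∈ spectrum ℂ (algebraMap ℂ (E →L[ℂ] E) (r * Complex.I) + a) :=
      spectrum.add_mem_add_iff.2 hk
    have h2 := spec_norm_le _ h1
    have h3 := ((TAdj.one.smul h (r * Complex.I)).add h ha).norm_sq_le hn
    rw [← Algebra.algebraMap_eq_smul_one] at h3
    have h4 : (conj (r * Complex.I : ℂ) • (1 : E →L[ℂ] E) + a) *
        (algebraMap ℂ (E →L[ℂ] E) (r * Complex.I) + a) = a * a + ((r ^ 2 : ℝ) : ℂ) • 1 := by
      ext z
      simp only [Algebra.algebraMap_eq_smul_one, mul_apply_eq_comp,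
        add_apply, smul_apply, one_apply_eq_self, map_add, map_smul, map_mul,
        Complex.conj_ofReal, Complex.conj_I]
      have : (((r ^ 2 : ℝ) : ℂ)) = (r * -Complex.I) * (r * Complex.I) := by
        push_cast
        linear_combination ((r : ℂ) ^ 2) * Complex.I_sq
      rw [this]
      module
    rw [h4] at h3
    have h5 : ‖a * a + ((r ^ 2 : ℝ) : ℂ) • (1 : E →L[ℂ] E)‖ ≤ ‖a‖ ^ 2 + r ^ 2 := by
      refine (norm_add_le _ _).trans (add_le_add ?_ ?_)
      · rw [sq]; exact norm_mul_le _ _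
      · rw [norm_smul, Complex.norm_real, Real.norm_of_nonneg (sq_nonneg r)]
        have : ‖(1 : E →L[ℂ] E)‖ ≤ 1 := ContinuousLinearMap.norm_id_le
        nlinarith [sq_nonneg r]
    have h6 : ‖k + r * Complex.I‖ ^ 2 = k.re ^ 2 + (k.im + r) ^ 2 := by
      rw [← Complex.normSq_eq_norm_sq, Complex.normSq_apply]
      simp
      ring
    have h7 := pow_le_pow_left₀ (norm_nonneg _) h2 2
    linarith
  by_contra hne
  have h1 := key ((‖a‖ ^ 2 + 1) / (2 * k.im))
  have h2 : 2 * k.im * ((‖a‖ ^ 2 + 1) / (2 * k.im)) = ‖a‖ ^ 2 + 1 := by field_simp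
  nlinarith [sq_nonneg k.re, sq_nonneg k.im]

lemma tring_poly_bound [CompleteSpace E] (h : IsTernaryProduct μ) (hn : IsCStarTringNorm μ)
    (x : E) (p : Polynomial ℝ) {M : ℝ} (hM : 0 ≤ M)
    (hp : ∀ r ∈ Set.Icc (-‖x‖ ^ 2) (‖x‖ ^ 2), |p.eval r| ≤ M) :
    ‖Polynomial.aeval (tLop h hn x x) (p.map Complex.ofRealHom)‖ ≤ M := by
  rcases subsingleton_or_nontrivial E with hs | hs
  · rw [Subsingleton.elim (Polynomial.aeval (tLop h hn x x) (p.map Complex.ofRealHom)) 0]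
    simpa using hM
  have hT := TAdj.tLop h hn x x
  refine (hT.aeval h p).norm_le hn hM fun k hk => ?_
  rw [spectrum.map_polynomial_aeval] at hk
  obtain ⟨l, hl, rfl⟩ := hk
  have h1 := hT.spec_real h hn hl
  have h2 := spec_norm_le _ hl
  rw [tLop_norm_self] at h2
  obtain ⟨r, rfl⟩ : ∃ r : ℝ, l = r := ⟨l.re, by apply Complex.ext <;> simp [h1]⟩
  rw [Complex.norm_real, Real.norm_eq_abs, abs_le] at h2
  have h3 := hp r ⟨by linarith [h2.1], h2.2⟩
  have h4 : Polynomial.eval (r : ℂ) (p.map Complex.ofRealHom) = ((p.eval r : ℝ) : ℂ) := by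
    have := Polynomial.eval_map_apply (f := Complex.ofRealHom) (p := p) r
    simpa using this
  simpa only [h4, Complex.norm_real, Real.norm_eq_abs] using h3

end TringAux

section TringHom

variable {E F : Type*}
    [NormedAddCommGroup E] [NormedSpace ℂ E] [CompleteSpace E]
    [NormedAddCommGroup F] [NormedSpace ℂ F] [CompleteSpace F]
    {μE : E → E → E → E} {μF : F → F → F → F}

lemma tring_contr
    (hE : IsTernaryProduct μE) (hF : IsTernaryProduct μF)
    (hnE : IsCStarTringNorm μE) (hnF : IsCStarTringNorm μF)
    (π : E →ₗ[ℂ] F)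
    (hπ : ∀ x y z : E, π (μE x y z) = μF (π x) (π y) (π z)) (x : E) : ‖π x‖ ≤ ‖x‖ := by
  have hex : ∀ k : ℂ, ‖x‖ ^ 2 < ‖k‖ → ∃ y : F, k • y - μF (π x) (π x) y = π x := fun k hk => by
    have h1 : k ∉ spectrum ℂ (tLop hE hnE x x) := fun hm => by
      have := spec_norm_le _ hm
      rw [tLop_norm_self] at this
      linarith
    rw [spectrum.notMem_iff] at h1
    obtain ⟨b, hb⟩ := (isUnit_iff_exists_and_exists.1 h1).1
    refine ⟨π (b x), ?_⟩
    have h2 := congrArg (fun T : E →L[ℂ] E => T x) hb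
    simp [Algebra.algebraMap_eq_smul_one] at h2
    rw [← hπ, ← map_smul, ← map_sub, h2]
  have hS : ‖tLop hF hnF (π x) (π x)‖ ≤ ‖x‖ ^ 2 := by
    refine (TAdj.tLop hF hnF _ _).norm_le hnF (by positivity) fun k hk => ?_
    by_contra! hlt
    apply hk
    have hk0 : k ≠ 0 := by
      rintro rfl
      simp at hlt
      nlinarith [sq_nonneg ‖x‖]
    obtain ⟨y, hy⟩ := hex k hlt
    obtain ⟨w, hw⟩ := hex (conj k) (by simpa using hlt)
    obtain ⟨h1, h2, h3, h4, h5, h6, h7, h8⟩ := id hF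
    have hsub1 : ∀ a b c d : F, μF (a - b) c d = μF a c d - μF b c d := fun a b c d => by
      rw [eq_sub_iff_add_eq, ← h1, sub_add_cancel]
    have hsub2 : ∀ a b c d : F, μF a (b - c) d = μF a b d - μF a c d := fun a b c d => by
      rw [eq_sub_iff_add_eq, ← h3, sub_add_cancel]
    have hsub3 : ∀ a b c d : F, μF a b (c - d) = μF a b c - μF a b d := fun a b c d => by
      rw [eq_sub_iff_add_eq, ← h5, sub_add_cancel]
    refine isUnit_iff_exists_and_exists.2 ⟨⟨k⁻¹ • (tLop hF hnF y (π x) + 1), ?_⟩,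
      ⟨k⁻¹ • (tLop hF hnF (π x) w + 1), ?_⟩⟩
    · have e1 : k • tLop hF hnF y (π x) - tLop hF hnF (π x) (π x) * tLop hF hnF y (π x)
          = tLop hF hnF (π x) (π x) := by
        ext z
        change k • μF y (π x) z - μF (π x) (π x) (μF y (π x) z) = μF (π x) (π x) z
        rw [← h8, ← h7, ← h2, ← hsub1, hy]
      rw [mul_smul_comm, inv_smul_eq_iff₀ hk0, Algebra.algebraMap_eq_smul_one, mul_add, mul_one,
        sub_mul, smul_mul_assoc, one_mul, e1]
      abel
    · have e1 : k • tLop hF hnF (π x) w - tLop hF hnF (π x) w * tLop hF hnF (π x) (π x)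
          = tLop hF hnF (π x) (π x) := by
        ext z
        change k • μF (π x) w z - μF (π x) w (μF (π x) (π x) z) = μF (π x) (π x) z
        have e2 := congrArg (fun v => μF (π x) v z) hw
        simp only [hsub2, h4, Complex.conj_conj] at e2
        rw [← h8, e2]
      rw [smul_mul_assoc, inv_smul_eq_iff₀ hk0, Algebra.algebraMap_eq_smul_one, add_mul, one_mul,
        mul_sub, mul_smul_comm, mul_one, e1]
      abel
  rw [tLop_norm_self] at hS
  exact le_of_pow_le_pow_left₀ two_ne_zero (norm_nonneg _) hS

lemma tring_inter
    (hE : IsTernaryProduct μE) (hF : IsTernaryProduct μF)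
    (hnE : IsCStarTringNorm μE) (hnF : IsCStarTringNorm μF)
    (π : E →ₗ[ℂ] F)
    (hπ : ∀ x y z : E, π (μE x y z) = μF (π x) (π y) (π z)) (x : E) (p : Polynomial ℂ) (z : E) :
    π (Polynomial.aeval (tLop hE hnE x x) p z) =
      Polynomial.aeval (tLop hF hnF (π x) (π x)) p (π z) := by
  induction p using Polynomial.induction_on' with
  | add p q hp hq => simp [hp, hq]
  | monomial n c =>
    have : ∀ z, π ((tLop hE hnE x x ^ n) z) = (tLop hF hnF (π x) (π x) ^ n) (π z) := by
      induction n with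
      | zero => simp
      | succ k ih =>
        intro z
        rw [pow_succ, pow_succ, mul_apply_eq_comp, mul_apply_eq_comp, ih]
        simp [hπ]
    rw [Polynomial.aeval_monomial, Polynomial.aeval_monomial, Algebra.algebraMap_eq_smul_one,
      Algebra.algebraMap_eq_smul_one, smul_mul_assoc, smul_mul_assoc, one_mul, one_mul,
      smul_apply, smul_apply, map_smul, this]

lemma tring_isom
    (hE : IsTernaryProduct μE) (hF : IsTernaryProduct μF)
    (hnE : IsCStarTringNorm μE) (hnF : IsCStarTringNorm μF)
    (π : E →ₗ[ℂ] F)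
    (hπ : ∀ x y z : E, π (μE x y z) = μF (π x) (π y) (π z)) (hinj : Function.Injective π)
    (x : E) : ‖x‖ ≤ ‖π x‖ := by
  have hcon := tring_contr hE hF hnE hnF π hπ
  rcases eq_or_ne x 0 with rfl | hx
  · simp
  have hx0 : 0 < ‖x‖ := norm_pos_iff.2 hx
  have hπx : 0 < ‖π x‖ := norm_pos_iff.2 fun h0 => hx (hinj (by simpa using h0))
  set s := ‖π x‖ ^ 2 with hs
  set t := ‖x‖ ^ 2 with ht
  have hs0 : 0 < s := by positivity
  have hst : s ≤ t := pow_le_pow_left₀ hπx.le (hcon x) 2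
  let g : ℝ → ℝ := fun r => s / max s |r|
  have hmax : ∀ r : ℝ, 0 < max s |r| := fun r => lt_max_of_lt_left hs0
  have hg : Continuous g :=
    continuous_const.div (continuous_const.max continuous_abs) fun r => (hmax r).ne'
  have hε : ∀ n : ℕ, (0 : ℝ) < 1 / ((n : ℝ) + 1) := fun n => by positivity
  choose p hp using fun n : ℕ => exists_polynomial_near_of_continuousOn (-t) t g hg.continuousOn
    (1 / ((n : ℝ) + 1)) (hε n)
  have hlim := tendsto_one_div_add_atTop_nhds_zero_nat (𝕜 := ℝ)
  let A : Polynomial ℝ → E →L[ℂ] E := fun q =>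
    Polynomial.aeval (tLop hE hnE x x) (q.map Complex.ofRealHom)
  let B : Polynomial ℝ → F →L[ℂ] F := fun q =>
    Polynomial.aeval (tLop hF hnF (π x) (π x)) (q.map Complex.ofRealHom)
  have hA : ∀ q M, 0 ≤ M → (∀ r ∈ Set.Icc (-t) t, |q.eval r| ≤ M) → ‖A q‖ ≤ M :=
    fun q M hM h => tring_poly_bound hE hnE x q hM (by simpa [ht] using h)
  have hB : ∀ q M, 0 ≤ M → (∀ r ∈ Set.Icc (-s) s, |q.eval r| ≤ M) → ‖B q‖ ≤ M :=
    fun q M hM h => tring_poly_bound hF hnF (π x) q hM (by simpa [hs] using h)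
  -- the sequence is Cauchy
  have hcau : CauchySeq fun n => A (p n) x := by
    refine cauchySeq_of_le_tendsto_0 (fun N : ℕ => 2 * (1 / ((N : ℝ) + 1)) * ‖x‖) ?_ ?_
    · intro n m N hn hm
      have e : A (p n) x - A (p m) x = A (p n - p m) x := by simp [A]
      rw [dist_eq_norm, e]
      refine (ContinuousLinearMap.le_opNorm _ _).trans ?_
      gcongr
      refine hA _ _ (by positivity) fun r hr => ?_
      have h1 := (hp n r hr).le.trans (one_div_le_one_div_of_le (by positivity)
        (by gcongr : (N : ℝ) + 1 ≤ (n : ℝ) + 1))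
      have h2 := (hp m r hr).le.trans (one_div_le_one_div_of_le (by positivity)
        (by gcongr : (N : ℝ) + 1 ≤ (m : ℝ) + 1))
      rw [abs_le] at h1 h2 ⊢
      rw [Polynomial.eval_sub]
      constructor <;> linarith [h1.1, h1.2, h2.1, h2.2]
    · simpa using (hlim.const_mul 2).mul_const ‖x‖
  obtain ⟨w, hw⟩ := cauchySeq_tendsto_of_complete hcau
  have hπc : Continuous π :=
    AddMonoidHomClass.continuous_of_bound π 1 (fun y => by simpa using hcon y)
  have hw1 : Filter.Tendsto (fun n => π (A (p n) x)) Filter.atTop (nhds (π w)) :=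
    (hπc.tendsto w).comp hw
  have hw2 : Filter.Tendsto (fun n => π (A (p n) x)) Filter.atTop (nhds (π x)) := by
    rw [tendsto_iff_norm_sub_tendsto_zero]
    refine squeeze_zero (fun n => norm_nonneg _) (fun n => ?_)
      (by simpa using hlim.mul_const ‖π x‖)
    have e : π (A (p n) x) - π x = B (p n - 1) (π x) := by
      simp only [A, B]
      rw [tring_inter hE hF hnE hnF π hπ]
      simp
    rw [e]
    refine (ContinuousLinearMap.le_opNorm _ _).trans ?_
    gcongr
    rw [← one_div]
    refine hB _ _ (hε n).le fun r hr => ?_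
    have h1 := (hp n r ⟨by linarith [hr.1], by linarith [hr.2]⟩).le
    have h2 : g r = 1 := by
      simp only [g]
      rw [max_eq_left (abs_le.2 hr), div_self hs0.ne']
    rw [h2] at h1
    simpa using h1
  have hwx : w = x := hinj (tendsto_nhds_unique hw1 hw2)
  rw [hwx] at hw
  have hT : Filter.Tendsto (fun n => ‖tLop hE hnE x x (A (p n) x)‖) Filter.atTop
      (nhds ‖tLop hE hnE x x x‖) :=
    (((tLop hE hnE x x).continuous.tendsto x).comp hw).norm
  have hR : Filter.Tendsto (fun n : ℕ => (s + t * (1 / ((n : ℝ) + 1))) * ‖x‖) Filter.atTop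
      (nhds (s * ‖x‖)) := by
    simpa using ((hlim.const_mul t).const_add s).mul_const ‖x‖
  have hfin : ‖tLop hE hnE x x x‖ ≤ s * ‖x‖ := by
    refine le_of_tendsto_of_tendsto' hT hR fun n => ?_
    have e : tLop hE hnE x x (A (p n) x) = A (Polynomial.X * p n) x := by simp [A]
    rw [e]
    refine (ContinuousLinearMap.le_opNorm _ _).trans ?_
    gcongr
    refine hA _ _ (by positivity) fun r hr => ?_
    have h1 := (hp n r hr).le
    have hr' : |r| ≤ t := abs_le.2 hr
    have h2 : |r| * g r ≤ s := by
      simp only [g]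
      rw [mul_div_assoc', div_le_iff₀ (hmax r), mul_comm]
      gcongr
      exact le_max_right _ _
    have hg0 : 0 ≤ g r := div_nonneg hs0.le (hmax r).le
    have h3 : |(p n).eval r| ≤ g r + 1 / ((n : ℝ) + 1) := by
      rw [abs_le] at h1 ⊢
      constructor <;> linarith [h1.1, h1.2]
    rw [Polynomial.eval_mul, Polynomial.eval_X, abs_mul]
    calc |r| * |(p n).eval r| ≤ |r| * (g r + 1 / ((n : ℝ) + 1)) := by gcongr
      _ = |r| * g r + |r| * (1 / ((n : ℝ) + 1)) := by ring
      _ ≤ _ := add_le_add h2 (mul_le_mul_of_nonneg_right hr' (hε n).le)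
  rw [tLop_apply, hnE.2] at hfin
  have : ‖x‖ ^ 2 ≤ ‖π x‖ ^ 2 := by
    rw [pow_succ] at hfin
    exact le_of_mul_le_mul_right hfin hx0
  exact le_of_pow_le_pow_left₀ two_ne_zero (norm_nonneg _) this

end TringHom

/-- Let `E` and `F` be `C*`-ternary rings and `π : E → F` a
homomorphism of the underlying `*`-trings.  Then `π` is contractive, and `π` is
isometric iff it is injective. -/
theorem stmt_15 {E F : Type*}
    [NormedAddCommGroup E] [NormedSpace ℂ E] [CompleteSpace E]
    [NormedAddCommGroup F] [NormedSpace ℂ F] [CompleteSpace F]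
    (μE : E → E → E → E) (μF : F → F → F → F)
    (hE : IsTernaryProduct μE) (hF : IsTernaryProduct μF)
    (hnE : IsCStarTringNorm μE) (hnF : IsCStarTringNorm μF)
    (π : E →ₗ[ℂ] F)
    (hπ : ∀ x y z : E, π (μE x y z) = μF (π x) (π y) (π z)) :
    (∀ x : E, ‖π x‖ ≤ ‖x‖) ∧
    ((∀ x : E, ‖π x‖ = ‖x‖) ↔ Function.Injective π) := by
  have hcon := tring_contr hE hF hnE hnF π hπ
  refine ⟨hcon, fun h => ?_, fun h x =>
    le_antisymm (hcon x) (tring_isom hE hF hnE hnF π hπ h x)⟩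
  rw [injective_iff_map_eq_zero]
  intro x hx
  have := h x
  rw [hx, norm_zero] at this
  exact norm_eq_zero.1 this.symm
end
end

section
/- If π : E → F is a homomorphism of *-trings between C*-ternary rings E and F, then the image π(E) is a closed subspace of F. -/
noncomputable section

open scoped ComplexConjugate

section Aux

variable {E : Type*} [NormedAddCommGroup E] [NormedSpace ℂ E]

/-- Bundled hypotheses. -/
structure TD (μ : E → E → E → E) : Prop where
  t : IsTernaryProduct μ
  n : IsCStarTringNorm μ

variable {μ : E → E → E → E}

namespace TD

lemma add1 (h : TD μ) (x x' y z : E) : μ (x + x') y z = μ x y z + μ x' y z := h.t.1 x x' y z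
lemma smul1 (h : TD μ) (c : ℂ) (x y z : E) : μ (c • x) y z = c • μ x y z := h.t.2.1 c x y z
lemma add2 (h : TD μ) (x y y' z : E) : μ x (y + y') z = μ x y z + μ x y' z :=
  h.t.2.2.1 x y y' z
lemma smul2 (h : TD μ) (c : ℂ) (x y z : E) : μ x (c • y) z = conj c • μ x y z :=
  h.t.2.2.2.1 c x y z
lemma add3 (h : TD μ) (x y z z' : E) : μ x y (z + z') = μ x y z + μ x y z' :=
  h.t.2.2.2.2.1 x y z z'
lemma smul3 (h : TD μ) (c : ℂ) (x y z : E) : μ x y (c • z) = c • μ x y z :=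
  h.t.2.2.2.2.2.1 c x y z
lemma as1 (h : TD μ) (x y z u v : E) : μ (μ x y z) u v = μ x (μ u z y) v :=
  h.t.2.2.2.2.2.2.1 x y z u v
lemma as2 (h : TD μ) (x y z u v : E) : μ x (μ u z y) v = μ x y (μ z u v) :=
  h.t.2.2.2.2.2.2.2 x y z u v
lemma nle (h : TD μ) (x y z : E) : ‖μ x y z‖ ≤ ‖x‖ * ‖y‖ * ‖z‖ := h.n.1 x y z
lemma ncube (h : TD μ) (x : E) : ‖μ x x x‖ = ‖x‖ ^ 3 := h.n.2 x

lemma sub2 (h : TD μ) (x y y' z : E) : μ x (y - y') z = μ x y z - μ x y' z := by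
  rw [eq_sub_iff_add_eq, ← h.add2, sub_add_cancel]
lemma sub3 (h : TD μ) (x y z z' : E) : μ x y (z - z') = μ x y z - μ x y z' := by
  rw [eq_sub_iff_add_eq, ← h.add3, sub_add_cancel]

lemma nondeg (h : TD μ) {u v : E} (H : ∀ a b, μ a b u = μ a b v) : u = v := by
  have : μ (u - v) (u - v) (u - v) = 0 := by rw [h.sub3, H, sub_self]
  have h2 := h.ncube (u - v)
  rw [this, norm_zero] at h2
  exact sub_eq_zero.1 (norm_eq_zero.1 (pow_eq_zero_iff (by norm_num) |>.1 h2.symm))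

/-- Left multiplication. -/
def L (h : TD μ) (x y : E) : E →L[ℂ] E :=
  LinearMap.mkContinuous
    { toFun := fun z => μ x y z
      map_add' := h.add3 x y
      map_smul' := fun c z => h.smul3 c x y z } (‖x‖ * ‖y‖) (h.nle x y)

@[simp] lemma L_apply (h : TD μ) (x y z : E) : h.L x y z = μ x y z := rfl

lemma L_norm (h : TD μ) (x y : E) : ‖h.L x y‖ ≤ ‖x‖ * ‖y‖ :=
  LinearMap.mkContinuous_norm_le _ (by positivity) _

/-- Mutually adjoint operators. -/
def Adj (_ : TD μ) (T S : E →L[ℂ] E) : Prop :=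
  (∀ a b c, μ a (T b) c = μ a b (S c)) ∧ (∀ a b c, μ a (S b) c = μ a b (T c))

lemma Adj.symm {h : TD μ} {T S : E →L[ℂ] E} (H : h.Adj T S) : h.Adj S T := ⟨H.2, H.1⟩

lemma Adj.unique {h : TD μ} {T S S' : E →L[ℂ] E} (H : h.Adj T S) (H' : h.Adj T S') : S = S' := by
  ext c
  exact h.nondeg fun a b => by rw [← H.1, ← H'.1]

lemma adj_L (h : TD μ) (x y : E) : h.Adj (h.L x y) (h.L y x) := by
  constructor <;> intro a b c <;> simp only [L_apply] <;> rw [h.as2]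

lemma Adj.add {h : TD μ} {T S T' S' : E →L[ℂ] E} (H : h.Adj T S) (H' : h.Adj T' S') :
    h.Adj (T + T') (S + S') := by
  constructor <;> intro a b c
  · simp [h.add2, h.add3, H.1, H'.1]
  · simp [h.add2, h.add3, H.2, H'.2]

lemma Adj.sub {h : TD μ} {T S T' S' : E →L[ℂ] E} (H : h.Adj T S) (H' : h.Adj T' S') :
    h.Adj (T - T') (S - S') := by
  constructor <;> intro a b c
  · simp [h.sub2, h.sub3, H.1, H'.1]
  · simp [h.sub2, h.sub3, H.2, H'.2]

lemma Adj.mul {h : TD μ} {T S T' S' : E →L[ℂ] E} (H : h.Adj T S) (H' : h.Adj T' S') :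
    h.Adj (T * T') (S' * S) := by
  constructor <;> intro a b c
  · simp [H.1, H'.1]
  · simp [H.2, H'.2]

lemma Adj.smul {h : TD μ} {T S : E →L[ℂ] E} (H : h.Adj T S) (k : ℂ) :
    h.Adj (k • T) (conj k • S) := by
  constructor <;> intro a b c
  · simp [h.smul2, h.smul3, H.1]
  · simp [h.smul2, h.smul3, H.2]

lemma adj_one (h : TD μ) : h.Adj 1 1 := by
  constructor <;> intro a b c <;> rfl

lemma Adj.norm_sq_le {h : TD μ} {T S : E →L[ℂ] E} (H : h.Adj T S) : ‖T‖ * ‖T‖ ≤ ‖S * T‖ := by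
  have key : ∀ z, ‖T z‖ ≤ Real.sqrt ‖S * T‖ * ‖z‖ := by
    intro z
    have h1 : ‖T z‖ ^ 3 ≤ ‖T z‖ * ‖z‖ * (‖S * T‖ * ‖z‖) := by
      rw [← h.ncube, H.1]
      refine (h.nle _ _ _).trans ?_
      gcongr
      exact (S * T).le_opNorm z
    rcases (norm_nonneg (T z)).eq_or_lt with h0 | h0
    · rw [← h0]; positivity
    have h2 : ‖T z‖ ^ 2 ≤ ‖S * T‖ * ‖z‖ ^ 2 := by
      refine le_of_mul_le_mul_left ?_ h0
      nlinarith
    refine (sq_le_sq₀ (norm_nonneg _) (by positivity)).1 ?_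
    rw [mul_pow, Real.sq_sqrt (norm_nonneg _)]
    exact h2
  have h3 := T.opNorm_le_bound (Real.sqrt_nonneg _) key
  calc ‖T‖ * ‖T‖ ≤ Real.sqrt ‖S * T‖ * Real.sqrt ‖S * T‖ := by gcongr
    _ = _ := Real.mul_self_sqrt (norm_nonneg _)

lemma Adj.norm_le {h : TD μ} {T S : E →L[ℂ] E} (H : h.Adj T S) : ‖T‖ ≤ ‖S‖ := by
  have := H.norm_sq_le.trans (norm_mul_le S T)
  rcases (norm_nonneg T).eq_or_lt with h0 | h0
  · rw [← h0]; positivity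
  exact le_of_mul_le_mul_right this h0

/-- The algebra of adjointable operators. -/
def alg (h : TD μ) : Subalgebra ℂ (E →L[ℂ] E) where
  carrier := {T | ∃ S, h.Adj T S}
  mul_mem' := fun ⟨_, H⟩ ⟨_, H'⟩ => ⟨_, H.mul H'⟩
  add_mem' := fun ⟨_, H⟩ ⟨_, H'⟩ => ⟨_, H.add H'⟩
  algebraMap_mem' := fun r => by
    rw [Algebra.algebraMap_eq_smul_one]
    exact ⟨_, h.adj_one.smul r⟩

/-- The adjoint. -/
def adj (h : TD μ) (T : h.alg) : h.alg := ⟨T.2.choose, ⟨_, T.2.choose_spec.symm⟩⟩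

lemma adj_spec (h : TD μ) (T : h.alg) : h.Adj T.1 (h.adj T).1 := T.2.choose_spec

lemma adj_eq (h : TD μ) {T S : h.alg} (H : h.Adj T.1 S.1) : h.adj T = S :=
  Subtype.ext ((h.adj_spec T).unique H)

instance instStarRing (h : TD μ) : StarRing h.alg where
  star := h.adj
  star_involutive T := h.adj_eq (h.adj_spec T).symm
  star_mul S T := h.adj_eq ((h.adj_spec S).mul (h.adj_spec T))
  star_add S T := h.adj_eq ((h.adj_spec S).add (h.adj_spec T))

lemma star_spec (h : TD μ) (T : h.alg) : h.Adj T.1 (star T).1 := h.adj_spec T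

instance instCStarRing (h : TD μ) : CStarRing h.alg where
  norm_mul_self_le T := (h.star_spec T).norm_sq_le

instance instStarModule (h : TD μ) : StarModule ℂ h.alg where
  star_smul c T := h.adj_eq ((h.adj_spec T).smul c)

lemma cont2 (h : TD μ) (a c : E) : Continuous fun b => μ a b c := by
  refine LipschitzWith.continuous (K := ‖a‖₊ * ‖c‖₊) (LipschitzWith.of_dist_le_mul fun x y => ?_)
  rw [dist_eq_norm, dist_eq_norm, ← h.sub2]
  refine (h.nle _ _ _).trans (le_of_eq ?_)
  push_cast
  ring

lemma cont3 (h : TD μ) (a b : E) : Continuous fun c => μ a b c := (h.L a b).continuous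

instance instComplete (h : TD μ) [CompleteSpace E] : CompleteSpace h.alg := by
  suffices hcl : IsClosed (h.alg : Set (E →L[ℂ] E)) from
    IsClosed.completeSpace_coe (s := (h.alg : Set (E →L[ℂ] E)))
  apply IsSeqClosed.isClosed
  intro T T₀ hT hlim
  choose S hS using hT
  have hc : CauchySeq S := by
    have := hlim.cauchySeq
    rw [Metric.cauchySeq_iff] at this ⊢
    intro ε hε
    obtain ⟨N, hN⟩ := this ε hε
    refine ⟨N, fun m hm n hn => lt_of_le_of_lt ?_ (hN m hm n hn)⟩
    rw [dist_eq_norm, dist_eq_norm]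
    exact ((hS m).sub (hS n)).symm.norm_le
  obtain ⟨S₀, hS₀⟩ := cauchySeq_tendsto_of_complete hc
  have ev : ∀ {U : ℕ → E →L[ℂ] E} {U₀} (_ : Filter.Tendsto U Filter.atTop (nhds U₀)) (z : E),
      Filter.Tendsto (fun n => U n z) Filter.atTop (nhds (U₀ z)) := fun hU z =>
    ((ContinuousLinearMap.apply ℂ E z).continuous.tendsto _).comp hU
  refine ⟨S₀, fun a b c => ?_, fun a b c => ?_⟩
  · refine tendsto_nhds_unique (((h.cont2 a c).tendsto _).comp (ev hlim b)) ?_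
    refine (((h.cont3 a b).tendsto _).comp (ev hS₀ c)).congr fun n => ?_
    exact ((hS n).1 a b c).symm
  · refine tendsto_nhds_unique (((h.cont2 a c).tendsto _).comp (ev hS₀ b)) ?_
    refine (((h.cont3 a b).tendsto _).comp (ev hlim c)).congr fun n => ?_
    exact ((hS n).2 a b c).symm

instance instCStarAlgebra (h : TD μ) [CompleteSpace E] : CStarAlgebra h.alg where

/-- Left multiplication in the algebra. -/
def M (h : TD μ) (x y : E) : h.alg := ⟨h.L x y, _, h.adj_L x y⟩

lemma M_apply (h : TD μ) (x y z : E) : (h.M x y).1 z = μ x y z := rfl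

lemma star_M (h : TD μ) (x y : E) : star (h.M x y) = h.M y x := h.adj_eq (h.adj_L x y)

lemma sa (h : TD μ) (x : E) : IsSelfAdjoint (h.M x x) := h.star_M x x

lemma alg_ext (h : TD μ) {S T : h.alg} (H : ∀ z, S.1 z = T.1 z) : S = T :=
  Subtype.ext (ContinuousLinearMap.ext H)

lemma mul_M (h : TD μ) (T : h.alg) (x y : E) : T * h.M x y = h.M (T.1 x) y := by
  refine h.alg_ext fun z => h.nondeg fun a b => ?_
  change μ a b (T.1 (μ x y z)) = μ a b (μ (T.1 x) y z)
  have H := h.star_spec T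
  rw [← H.2, ← h.as2, ← h.as1, H.2, h.as1, h.as2]

lemma M_mul (h : TD μ) (T : h.alg) (x y : E) : h.M x y * T = h.M x ((star T).1 y) := by
  refine h.alg_ext fun z => ?_
  exact ((h.star_spec T).2 x y z).symm

lemma norm_M (h : TD μ) (x : E) : ‖h.M x x‖ = ‖x‖ ^ 2 := by
  apply le_antisymm
  · rw [sq]; exact h.L_norm x x
  · have h1 : ‖x‖ ^ 3 ≤ ‖h.M x x‖ * ‖x‖ := by
      rw [← h.ncube]; exact (h.L x x).le_opNorm x
    rcases (norm_nonneg x).eq_or_lt with h0 | h0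
    · rw [← h0]; simpa using norm_nonneg (h.M x x)
    refine le_of_mul_le_mul_right ?_ h0
    nlinarith

end TD

end Aux

section Aux2

variable {E F : Type*} [NormedAddCommGroup E] [NormedSpace ℂ E] [CompleteSpace E]
    [NormedAddCommGroup F] [NormedSpace ℂ F] [CompleteSpace F]
    {μE : E → E → E → E} {μF : F → F → F → F} (hE : TD μE) (hF : TD μF)
    (π : E →ₗ[ℂ] F)


lemma spec_sub (hπ : ∀ x y z : E, π (μE x y z) = μF (π x) (π y) (π z)) (x : E) (r : ℂ)
    (hr : r ≠ 0) (hs : r ∈ spectrum ℂ (hF.M (π x) (π x))) : r ∈ spectrum ℂ (hE.M x x) := by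
  by_contra hn
  rw [spectrum.notMem_iff] at hn
  obtain ⟨⟨v, R, hv1, hv2⟩, hv⟩ := hn
  simp only at hv
  subst hv
  rw [Algebra.algebraMap_eq_smul_one, sub_mul, smul_mul_assoc, one_mul] at hv1
  rw [Algebra.algebraMap_eq_smul_one, mul_sub, mul_smul_comm, mul_one] at hv2
  refine hs ?_
  set y := R.1 x with hy
  have e1 : μE x x y = r • y - x := by
    have h2 : r • y - μE x x y = x := congrArg (fun T : hE.alg => T.1 x) hv1
    rw [← h2, sub_sub_cancel, h2]
  have e2 : μE y x x = r • y - x := by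
    have h2 : r • y - R.1 (μE x x x) = x := congrArg (fun T : hE.alg => T.1 x) hv2
    have h3 : R.1 (μE x x x) = μE y x x :=
      congrArg (fun T : hE.alg => T.1 x) (hE.mul_M R x x)
    rw [h3] at h2
    rw [← h2, sub_sub_cancel, h2]
  set D := hF.M (π x) (π x) with hD
  set N := hF.M (π y) (π x) with hN
  have f1 : D * N = r • N - D := by
    refine hF.alg_ext fun z => ?_
    change μF (π x) (π x) (μF (π y) (π x) z) = r • μF (π y) (π x) z - μF (π x) (π x) z
    rw [← hF.as2, ← hF.as1, ← hπ, e1, map_sub, map_smul, sub_eq_add_neg, hF.add1, hF.smul1,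
      ← neg_one_smul ℂ (π x), hF.smul1, neg_one_smul, sub_eq_add_neg]
  have f2 : N * D = r • N - D := by
    refine hF.alg_ext fun z => ?_
    change μF (π y) (π x) (μF (π x) (π x) z) = r • μF (π y) (π x) z - μF (π x) (π x) z
    rw [← hF.as2, ← hF.as1, ← hπ, e2, map_sub, map_smul, sub_eq_add_neg, hF.add1, hF.smul1,
      ← neg_one_smul ℂ (π x), hF.smul1, neg_one_smul, sub_eq_add_neg]
  have g1 : (algebraMap ℂ hF.alg r - D) * (r⁻¹ • (1 + N)) = 1 := by
    rw [mul_smul_comm, Algebra.algebraMap_eq_smul_one, sub_mul, mul_add, mul_add, f1,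
      smul_mul_assoc, smul_mul_assoc, one_mul, one_mul, mul_one]
    rw [show r • (1 : hF.alg) + r • N - (D + (r • N - D)) = r • 1 by abel, smul_smul,
      inv_mul_cancel₀ hr, one_smul]
  have g2 : (r⁻¹ • (1 + N)) * (algebraMap ℂ hF.alg r - D) = 1 := by
    rw [smul_mul_assoc, Algebra.algebraMap_eq_smul_one, mul_sub, add_mul, add_mul, f2,
      mul_smul_comm, mul_smul_comm, one_mul, one_mul, mul_one]
    rw [show r • (1 : hF.alg) + r • N - (D + (r • N - D)) = r • 1 by abel, smul_smul,
      inv_mul_cancel₀ hr, one_smul]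
  exact ⟨⟨_, _, g1, g2⟩, rfl⟩

include hE hF in
lemma contr (hπ : ∀ x y z : E, π (μE x y z) = μF (π x) (π y) (π z)) (x : E) : ‖π x‖ ≤ ‖x‖ := by
  have h1 : spectralRadius ℂ (hF.M (π x) (π x)) ≤ spectralRadius ℂ (hE.M x x) := by
    refine iSup₂_le fun k hk => ?_
    by_cases hk0 : k = 0
    · simp [hk0]
    · exact le_iSup₂ (f := fun (k : ℂ) (_ : k ∈ spectrum ℂ (hE.M x x)) => (‖k‖₊ : ENNReal)) k
        (spec_sub hE hF π hπ x k hk0 hk)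
  rw [(hE.sa x).spectralRadius_eq_nnnorm, (hF.sa (π x)).spectralRadius_eq_nnnorm] at h1
  have h2 : ‖hF.M (π x) (π x)‖ ≤ ‖hE.M x x‖ := by exact_mod_cast h1
  rw [hE.norm_M, hF.norm_M] at h2
  exact (sq_le_sq₀ (norm_nonneg _) (norm_nonneg _)).1 h2

lemma poly_map (hπ : ∀ x y z : E, π (μE x y z) = μF (π x) (π y) (π z)) (x : E)
    (p : Polynomial ℝ) : π ((Polynomial.aeval (hE.M x x) p).1 x) =
      (Polynomial.aeval (hF.M (π x) (π x)) p).1 (π x) := by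
  suffices H : ∀ z, π ((Polynomial.aeval (hE.M x x) p).1 z) =
      (Polynomial.aeval (hF.M (π x) (π x)) p).1 (π z) from H x
  induction p using Polynomial.induction_on' with
  | add p q hp hq =>
    intro z
    rw [map_add, map_add]
    change π ((Polynomial.aeval (hE.M x x) p).1 z + (Polynomial.aeval (hE.M x x) q).1 z) = _
    rw [map_add, hp, hq]
    rfl
  | monomial n r =>
    intro z
    rw [Polynomial.aeval_monomial, Polynomial.aeval_monomial, Algebra.algebraMap_eq_smul_one,
      Algebra.algebraMap_eq_smul_one, smul_mul_assoc, smul_mul_assoc, one_mul, one_mul]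
    change π ((r : ℂ) • ((hE.M x x) ^ n).1 z) = (r : ℂ) • ((hF.M (π x) (π x)) ^ n).1 (π z)
    rw [map_smul]
    congr 1
    induction n generalizing z with
    | zero => rfl
    | succ n ih =>
      rw [pow_succ, pow_succ]
      change π (((hE.M x x) ^ n).1 (μE x x z)) =
        ((hF.M (π x) (π x)) ^ n).1 (μF (π x) (π x) (π z))
      rw [ih, hπ]

lemma spec_bd (h : TD μE) (x : E) (t : ℝ) (ht : t ∈ spectrum ℝ (h.M x x)) : |t| ≤ ‖x‖ ^ 2 := by
  have := norm_apply_le_norm_cfc (fun t : ℝ => t) (h.M x x) ht (by fun_prop) (h.sa x)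
  rw [cfc_id' ℝ (h.M x x) (h.sa x), h.norm_M] at this
  exact this

lemma cfc_map (hπ : ∀ x y z : E, π (μE x y z) = μF (π x) (π y) (π z)) (x : E)
    (f : ℝ → ℝ) (hf : Continuous f) : π ((cfc f (hE.M x x)).1 x) =
      (cfc f (hF.M (π x) (π x))).1 (π x) := by
  have hc := contr hE hF π hπ
  rw [← sub_eq_zero, ← norm_le_zero_iff]
  refine le_of_forall_pos_le_add fun ε hε => ?_
  set δ := ε / (2 * (‖x‖ + 1)) with hδ
  have hδ0 : 0 < δ := by positivity
  obtain ⟨p, hp⟩ := exists_polynomial_near_of_continuousOn (-‖x‖ ^ 2) (‖x‖ ^ 2) f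
    hf.continuousOn δ hδ0
  have b1 : ‖cfc f (hE.M x x) - Polynomial.aeval (hE.M x x) p‖ ≤ δ := by
    rw [← cfc_polynomial p _ (hE.sa x), ← cfc_sub f _ _ hf.continuousOn (by fun_prop)]
    refine norm_cfc_le hδ0.le fun t ht => ?_
    rw [Real.norm_eq_abs, abs_sub_comm]
    have := abs_le.1 (spec_bd hE x t ht)
    exact (hp t ⟨by linarith [this.1], this.2⟩).le
  have b2 : ‖cfc f (hF.M (π x) (π x)) - Polynomial.aeval (hF.M (π x) (π x)) p‖ ≤ δ := by
    rw [← cfc_polynomial p _ (hF.sa _), ← cfc_sub f _ _ hf.continuousOn (by fun_prop)]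
    refine norm_cfc_le hδ0.le fun t ht => ?_
    rw [Real.norm_eq_abs, abs_sub_comm]
    have h1 : ‖π x‖ ^ 2 ≤ ‖x‖ ^ 2 := by gcongr; exact hc x
    have := abs_le.1 ((spec_bd hF _ t ht).trans h1)
    exact (hp t ⟨by linarith [this.1], this.2⟩).le
  set P := Polynomial.aeval (hE.M x x) p with hP
  set Q := Polynomial.aeval (hF.M (π x) (π x)) p with hQ
  set A := cfc f (hE.M x x)
  set B := cfc f (hF.M (π x) (π x))
  have e : π (A.1 x) - B.1 (π x) = π ((A - P).1 x) - (B - Q).1 (π x) := by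
    change _ = π (A.1 x - P.1 x) - (B.1 (π x) - Q.1 (π x))
    rw [map_sub, hP, hQ, poly_map hE hF π hπ x p]
    abel
  rw [e]
  have c1 : ‖π ((A - P).1 x)‖ ≤ δ * ‖x‖ :=
    (hc _).trans (((A - P).1.le_opNorm x).trans (by gcongr; exact b1))
  have c2 : ‖(B - Q).1 (π x)‖ ≤ δ * ‖x‖ :=
    ((B - Q).1.le_opNorm _).trans (by gcongr; exacts [b2, hc x])
  have c3 : δ * (2 * (‖x‖ + 1)) = ε := by rw [hδ]; field_simp
  have := norm_sub_le (π ((A - P).1 x)) ((B - Q).1 (π x))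
  nlinarith

lemma norm_cfc_app (h : TD μE) (x : E) (f : ℝ → ℝ) (hf : Continuous f) (c : ℝ) (hc : 0 ≤ c)
    (hb : ∀ t, |t| * f t ^ 2 ≤ c ^ 2) : ‖(cfc f (h.M x x)).1 x‖ ≤ c := by
  set T := cfc f (h.M x x) with hT
  have hsa : star T = T := cfc_predicate f (h.M x x)
  have e : h.M (T.1 x) (T.1 x) = cfc (fun t => f t * t * f t) (h.M x x) := by
    rw [cfc_mul (fun t => f t * t) f _ (by fun_prop) (by fun_prop),
      cfc_mul f (fun t => t) _ (by fun_prop) (by fun_prop), cfc_id' ℝ _ (h.sa x), ← hT,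
      h.mul_M, h.M_mul, hsa]
  rw [← sq_le_sq₀ (norm_nonneg _) hc, ← h.norm_M, e]
  refine norm_cfc_le (by positivity) fun t _ => ?_
  rw [Real.norm_eq_abs, abs_mul, abs_mul]
  refine le_trans (le_of_eq ?_) (hb t)
  rw [← sq_abs (f t)]; ring

include hE hF in
lemma lift_norm (hπ : ∀ x y z : E, π (μE x y z) = μF (π x) (π y) (π z)) (x : E) :
    ∃ x', π x' = π x ∧ ‖x'‖ ≤ ‖π x‖ := by
  rcases (norm_nonneg (π x)).eq_or_lt with h0 | h0
  · refine ⟨0, ?_, by simp⟩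
    rw [map_zero, eq_comm, ← norm_eq_zero, h0]
  set m := ‖π x‖ with hm
  have hpos : ∀ t : ℝ, 0 < max m (Real.sqrt |t|) := fun t => lt_max_of_lt_left h0
  let f : ℝ → ℝ := fun t => m / max m (Real.sqrt |t|)
  have hf : Continuous f :=
    Continuous.div (by fun_prop) (by fun_prop) fun t => (hpos t).ne'
  refine ⟨(cfc f (hE.M x x)).1 x, ?_, norm_cfc_app hE x f hf m h0.le fun t => ?_⟩
  · rw [cfc_map hE hF π hπ x f hf]
    have : cfc f (hF.M (π x) (π x)) = cfc (fun _ : ℝ => (1 : ℝ)) (hF.M (π x) (π x)) := by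
      refine cfc_congr fun t ht => ?_
      have h1 := spec_bd hF (π x) t ht
      have h2 : Real.sqrt |t| ≤ m := Real.sqrt_le_iff.2 ⟨h0.le, h1⟩
      change m / max m (Real.sqrt |t|) = 1
      rw [max_eq_left h2, div_self h0.ne']
    rw [this, cfc_const_one ℝ _ (hF.sa _)]
    rfl
  · change |t| * (m / max m (Real.sqrt |t|)) ^ 2 ≤ m ^ 2
    rw [div_pow, ← mul_div_assoc, div_le_iff₀ (by have := hpos t; positivity), mul_comm]
    gcongr
    calc |t| = Real.sqrt |t| ^ 2 := (Real.sq_sqrt (abs_nonneg t)).symm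
      _ ≤ _ := by gcongr; exact le_max_right _ _

end Aux2

/-- If `π : E → F` is a homomorphism of `*`-trings between
`C*`-ternary rings `E` and `F`, then the image `π(E)` is closed in `F`. -/
theorem stmt_16 {E F : Type*}
    [NormedAddCommGroup E] [NormedSpace ℂ E] [CompleteSpace E]
    [NormedAddCommGroup F] [NormedSpace ℂ F] [CompleteSpace F]
    (μE : E → E → E → E) (μF : F → F → F → F)
    (hE : IsTernaryProduct μE) (hF : IsTernaryProduct μF)
    (hnE : IsCStarTringNorm μE) (hnF : IsCStarTringNorm μF)
    (π : E →ₗ[ℂ] F)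
    (hπ : ∀ x y z : E, π (μE x y z) = μF (π x) (π y) (π z)) :
    IsClosed (Set.range π) := by
  have HE : TD μE := ⟨hE, hnE⟩
  have HF : TD μF := ⟨hF, hnF⟩
  let f : NormedAddGroupHom E F := π.toAddMonoidHom.mkNormedAddGroupHom 1
    (fun x => by rw [one_mul]; exact contr HE HF π hπ x)
  have hs : f.SurjectiveOnWith f.range 1 := by
    rintro _ ⟨x, rfl⟩
    obtain ⟨x', h1, h2⟩ := lift_norm HE HF π hπ x
    exact ⟨x', h1, by rw [one_mul]; exact h2⟩
  have hcl := controlled_closure_of_complete one_pos one_pos hs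
  refine isClosed_of_closure_subset fun y hy => ?_
  obtain ⟨x, hx, -⟩ := hcl y hy
  exact ⟨x, hx⟩
end
end

section
/- Let E be a *-tring and F₁, F₂ ideals of E such that E = F₁ ⊕ F₂ (internal direct sum of subspaces). Let γ be a C*-seminorm on E. If x = y + z with y ∈ F₁ and z ∈ F₂, then γ(x) = max{γ(y), γ(z)}. -/
noncomputable section

open scoped ComplexConjugate

/-- A `C*`-seminorm on a `*`-tring `(E, μ)`. -/
def IsCStarSeminormTring {E : Type*} [AddCommGroup E] [Module ℂ E]
    (μ : E → E → E → E) (γ : E → ℝ) : Prop :=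
  (∀ x y : E, γ (x + y) ≤ γ x + γ y) ∧
  (∀ (c : ℂ) (x : E), γ (c • x) = ‖c‖ * γ x) ∧
  (∀ x y z : E, γ (μ x y z) ≤ γ x * γ y * γ z) ∧
  (∀ x : E, γ (μ x x x) = (γ x) ^ 3)

/-- A `C*`-seminorm on a complex `*`-algebra `A`. -/
def IsCStarSeminormAlg {A : Type*} [NonUnitalRing A] [Module ℂ A] [StarRing A]
    (α : A → ℝ) : Prop :=
  (∀ a b : A, α (a + b) ≤ α a + α b) ∧
  (∀ (c : ℂ) (a : A), α (c • a) = ‖c‖ * α a) ∧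
  (∀ a b : A, α (a * b) ≤ α a * α b) ∧
  (∀ a : A, α (star a * a) = (α a) ^ 2)

/-- Let `E` be a `*`-tring and `F₁, F₂` ideals of `E` with
`E = F₁ ⊕ F₂` (internal direct sum of subspaces).  If `γ` is a `C*`-seminorm on
`E` and `x = y + z` with `y ∈ F₁`, `z ∈ F₂`, then `γ(x) = max(γ(y), γ(z))`. -/
theorem stmt_17 {E : Type*} [AddCommGroup E] [Module ℂ E]
    (μ : E → E → E → E) (h : IsTernaryProduct μ)
    (F₁ F₂ : Submodule ℂ E)
    (h₁ : ∀ x y z : E,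
      (x ∈ F₁ → μ x y z ∈ F₁) ∧ (y ∈ F₁ → μ x y z ∈ F₁) ∧ (z ∈ F₁ → μ x y z ∈ F₁))
    (h₂ : ∀ x y z : E,
      (x ∈ F₂ → μ x y z ∈ F₂) ∧ (y ∈ F₂ → μ x y z ∈ F₂) ∧ (z ∈ F₂ → μ x y z ∈ F₂))
    (hsup : F₁ ⊔ F₂ = ⊤) (hinf : F₁ ⊓ F₂ = ⊥)
    (γ : E → ℝ) (hγ : IsCStarSeminormTring μ γ) :
    ∀ y ∈ F₁, ∀ z ∈ F₂, γ (y + z) = max (γ y) (γ z) := by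
  obtain ⟨a1, -, a2, -, a3, -, -, -⟩ := h
  obtain ⟨g1, g2, g3, g4⟩ := hγ
  have nn : ∀ x, 0 ≤ γ x := by
    intro x
    have e0 : γ (0 : E) = 0 := by simpa using g2 0 0
    have e1 : γ ((-1 : ℂ) • x) = γ x := by simpa using g2 (-1) x
    have e2 := g1 x ((-1 : ℂ) • x)
    have e3 : x + (-1 : ℂ) • x = 0 := by simp
    rw [e3, e0, e1] at e2
    linarith
  have z0 : ∀ w, w ∈ F₁ → w ∈ F₂ → w = 0 := by
    intro w hw1 hw2
    have : w ∈ F₁ ⊓ F₂ := ⟨hw1, hw2⟩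
    rw [hinf] at this
    simpa using this
  have cube : ∀ y ∈ F₁, ∀ z ∈ F₂, μ (y + z) (y + z) (y + z) = μ y y y + μ z z z := by
    intro y hy z hz
    have b1 : μ y y z = 0 := z0 _ ((h₁ _ _ _).1 hy) ((h₂ _ _ _).2.2 hz)
    have b2 : μ y z y = 0 := z0 _ ((h₁ _ _ _).1 hy) ((h₂ _ _ _).2.1 hz)
    have b3 : μ y z z = 0 := z0 _ ((h₁ _ _ _).1 hy) ((h₂ _ _ _).2.2 hz)
    have b4 : μ z y y = 0 := z0 _ ((h₁ _ _ _).2.1 hy) ((h₂ _ _ _).1 hz)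
    have b5 : μ z y z = 0 := z0 _ ((h₁ _ _ _).2.1 hy) ((h₂ _ _ _).1 hz)
    have b6 : μ z z y = 0 := z0 _ ((h₁ _ _ _).2.2 hy) ((h₂ _ _ _).1 hz)
    simp [a1, a2, a3, b1, b2, b3, b4, b5, b6]
  have key : ∀ n : ℕ, ∀ y ∈ F₁, ∀ z ∈ F₂,
      γ (y + z) ^ (3 ^ n) ≤ γ y ^ (3 ^ n) + γ z ^ (3 ^ n) := by
    intro n
    induction n with
    | zero => intro y _ z _; simpa using g1 y z
    | succ n ih =>
      intro y hy z hz
      have := ih _ ((h₁ y y y).1 hy) _ ((h₂ z z z).1 hz)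
      rw [← cube y hy z hz, g4, g4, g4, ← pow_mul, ← pow_mul, ← pow_mul] at this
      rwa [pow_succ' 3 n]
  have low : ∀ x y, μ x y y = μ y y y → γ y ≤ γ x := by
    intro x y e
    have e1 := g3 x y y
    rw [e, g4] at e1
    rcases (nn y).eq_or_lt with h0 | h0
    · rw [← h0]; exact nn x
    · have : γ y * (γ y * γ y) ≤ γ x * (γ y * γ y) := by nlinarith
      exact le_of_mul_le_mul_right this (by positivity)
  intro y hy z hz
  apply le_antisymm
  · by_contra! hlt
    set M := max (γ y) (γ z) with hM
    have hy' : γ y ≤ M := le_max_left _ _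
    have hz' : γ z ≤ M := le_max_right _ _
    have hM0 : 0 ≤ M := (nn y).trans hy'
    have bd : ∀ n : ℕ, γ (y + z) ^ (3 ^ n) ≤ 2 * M ^ (3 ^ n) := by
      intro n
      have := key n y hy z hz
      have := pow_le_pow_left₀ (nn y) hy' (3 ^ n)
      have := pow_le_pow_left₀ (nn z) hz' (3 ^ n)
      linarith
    rcases hM0.eq_or_lt with h0 | h0
    · have := bd 0
      rw [← h0] at this hlt
      simp at this
      linarith
    · have hr : 1 < γ (y + z) / M := (one_lt_div h0).2 hlt
      obtain ⟨n, hn⟩ := pow_unbounded_of_one_lt 2 hr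
      have h3 : n ≤ 3 ^ n := (Nat.lt_pow_self (by norm_num)).le
      have h4 := pow_le_pow_right₀ hr.le h3
      have h5 : (γ (y + z) / M) ^ (3 ^ n) ≤ 2 := by
        rw [div_pow, div_le_iff₀ (by positivity)]
        exact bd n
      linarith
  · apply max_le
    · apply low
      have b4 : μ z y y = 0 := z0 _ ((h₁ _ _ _).2.1 hy) ((h₂ _ _ _).1 hz)
      rw [a1, b4, add_zero]
    · apply low
      have b3 : μ y z z = 0 := z0 _ ((h₁ _ _ _).1 hy) ((h₂ _ _ _).2.2 hz)
      rw [a1, b3, zero_add]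
end
end

section
/- Let E be a C*-ternary ring and F a closed ideal of E. Then the quotient space E/F, equipped with the induced ternary product and the quotient norm ‖x + F‖ = inf{‖x + f‖ : f ∈ F}, is a C*-ternary ring; in particular the quotient norm is a C*-norm for the induced ternary product. -/
noncomputable section

open scoped ComplexConjugate

section helpers

variable {E : Type*} [NormedAddCommGroup E] [NormedSpace ℂ E]

/-- Bundled C*-ternary axioms (without completeness). -/
structure IsCT (μ : E → E → E → E) : Prop where
  tern : IsTernaryProduct μ
  bd : ∀ x y z : E, ‖μ x y z‖ ≤ ‖x‖ * ‖y‖ * ‖z‖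
  cube : ∀ x : E, ‖μ x x x‖ = ‖x‖ ^ 3

namespace IsCT

variable {μ : E → E → E → E} (H : IsCT μ)

include H

lemma add1 (x x' y z : E) : μ (x + x') y z = μ x y z + μ x' y z := H.tern.1 x x' y z
lemma smul1 (c : ℂ) (x y z : E) : μ (c • x) y z = c • μ x y z := H.tern.2.1 c x y z
lemma add2 (x y y' z : E) : μ x (y + y') z = μ x y z + μ x y' z := H.tern.2.2.1 x y y' z
lemma smul2 (c : ℂ) (x y z : E) : μ x (c • y) z = conj c • μ x y z := H.tern.2.2.2.1 c x y z
lemma add3 (x y z z' : E) : μ x y (z + z') = μ x y z + μ x y z' := H.tern.2.2.2.2.1 x y z z'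
lemma smul3 (c : ℂ) (x y z : E) : μ x y (c • z) = c • μ x y z := H.tern.2.2.2.2.2.1 c x y z
lemma assoc1 (x y z u v : E) : μ (μ x y z) u v = μ x (μ u z y) v :=
  H.tern.2.2.2.2.2.2.1 x y z u v
lemma assoc2 (x y z u v : E) : μ x (μ u z y) v = μ x y (μ z u v) :=
  H.tern.2.2.2.2.2.2.2 x y z u v

lemma cont1 (y z : E) : Continuous fun x => μ x y z := by
  let f : E →+ E := AddMonoidHom.mk' (fun x => μ x y z) (fun a b => H.add1 a b y z)
  exact AddMonoidHomClass.continuous_of_bound f (‖y‖ * ‖z‖) fun x =>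
    (H.bd x y z).trans (le_of_eq (by ring))

lemma cont2 (x z : E) : Continuous fun y => μ x y z := by
  let f : E →+ E := AddMonoidHom.mk' (fun y => μ x y z) (fun a b => H.add2 x a b z)
  exact AddMonoidHomClass.continuous_of_bound f (‖x‖ * ‖z‖) fun y =>
    (H.bd x y z).trans (le_of_eq (by ring))

lemma cont3 (x y : E) : Continuous fun z => μ x y z := by
  let f : E →+ E := AddMonoidHom.mk' (fun z => μ x y z) (fun a b => H.add3 x y a b)
  exact AddMonoidHomClass.continuous_of_bound f (‖x‖ * ‖y‖) fun z => H.bd x y z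

lemma sub3 (x y z z' : E) : μ x y (z - z') = μ x y z - μ x y z' :=
  map_sub (AddMonoidHom.mk' (fun z => μ x y z) (fun a b => H.add3 x y a b)) z z'

lemma zero1 (y z : E) : μ 0 y z = 0 :=
  map_zero (AddMonoidHom.mk' (fun x => μ x y z) (fun a b => H.add1 a b y z))
lemma zero2 (x z : E) : μ x 0 z = 0 :=
  map_zero (AddMonoidHom.mk' (fun y => μ x y z) (fun a b => H.add2 x a b z))
lemma zero3 (x y : E) : μ x y 0 = 0 :=
  map_zero (AddMonoidHom.mk' (fun z => μ x y z) (fun a b => H.add3 x y a b))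

lemma eq_of_forall {a b : E} (hab : ∀ x y, μ x y a = μ x y b) : a = b := by
  have h1 : μ (a - b) (a - b) (a - b) = 0 := by
    rw [H.sub3, hab, sub_self]
  have h2 := H.cube (a - b)
  rw [h1, norm_zero] at h2
  have h3 : ‖a - b‖ = 0 := by
    by_contra hne
    exact pow_ne_zero 3 hne h2.symm
  exact sub_eq_zero.mp (norm_eq_zero.mp h3)

end IsCT

/-- `S` is an adjoint of `T`. -/
structure IsAdj (μ : E → E → E → E) (T S : E →L[ℂ] E) : Prop where
  l : ∀ x y z, μ (T x) y z = T (μ x y z)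
  l' : ∀ x y z, μ (S x) y z = S (μ x y z)
  m : ∀ x y z, μ x (T y) z = μ x y (S z)
  m' : ∀ x y z, μ x (S y) z = μ x y (T z)

namespace IsAdj

variable {μ : E → E → E → E}

lemma symm' {T S : E →L[ℂ] E} (h : IsAdj μ T S) : IsAdj μ S T := ⟨h.l', h.l, h.m', h.m⟩

lemma unique (H : IsCT μ) {T S S' : E →L[ℂ] E} (h : IsAdj μ T S) (h' : IsAdj μ T S') :
    S = S' := by
  ext z
  exact H.eq_of_forall fun x y => by rw [← h.m, ← h'.m]

lemma add (H : IsCT μ) {T S T' S' : E →L[ℂ] E} (h : IsAdj μ T S) (h' : IsAdj μ T' S') :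
    IsAdj μ (T + T') (S + S') := by
  constructor <;> intro x y z <;>
  simp [H.add1, H.add2, H.add3, h.l, h.l', h.m, h.m', h'.l, h'.l', h'.m, h'.m']

lemma mul {T S T' S' : E →L[ℂ] E} (h : IsAdj μ T S) (h' : IsAdj μ T' S') :
    IsAdj μ (T * T') (S' * S) := by
  constructor <;> intro x y z <;>
  simp [h.l, h.l', h.m, h.m', h'.l, h'.l', h'.m, h'.m']

lemma smul (H : IsCT μ) (c : ℂ) {T S : E →L[ℂ] E} (h : IsAdj μ T S) :
    IsAdj μ (c • T) (conj c • S) := by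
  constructor <;> intro x y z <;>
  simp [H.smul1, H.smul2, H.smul3, h.l, h.l', h.m, h.m']

lemma one : IsAdj μ 1 1 := by
  constructor <;> intro x y z <;> simp

lemma zero (H : IsCT μ) : IsAdj μ 0 0 := by
  constructor <;> intro x y z <;> simp [H.zero1, H.zero2, H.zero3]

end IsAdj

/-- The algebra of adjointable operators. -/
def adjAlg {μ : E → E → E → E} (H : IsCT μ) : Subalgebra ℂ (E →L[ℂ] E) where
  carrier := {T | ∃ S, IsAdj μ T S}
  mul_mem' := by
    rintro _ _ ⟨S, h⟩ ⟨S', h'⟩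
    exact ⟨_, h.mul h'⟩
  add_mem' := by
    rintro _ _ ⟨S, h⟩ ⟨S', h'⟩
    exact ⟨_, h.add H h'⟩
  algebraMap_mem' c := by
    rw [Algebra.algebraMap_eq_smul_one]
    exact ⟨_, IsAdj.one.smul H c⟩

variable {μ : E → E → E → E} {H : IsCT μ}

/-- the adjoint -/
def adjStar (T : adjAlg H) : adjAlg H := ⟨T.2.choose, ⟨T.1, T.2.choose_spec.symm'⟩⟩

lemma adjStar_spec (T : adjAlg H) : IsAdj μ T.1 (adjStar T).1 := T.2.choose_spec

lemma adjStar_eq {T S : adjAlg H} (h : IsAdj μ T.1 S.1) : adjStar T = S :=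
  Subtype.ext ((adjStar_spec T).unique H h)

instance : StarRing (adjAlg H) where
  star := adjStar
  star_involutive T := adjStar_eq (adjStar_spec T).symm'
  star_mul T S := adjStar_eq ((adjStar_spec T).mul (adjStar_spec S))
  star_add T S := adjStar_eq ((adjStar_spec T).add H (adjStar_spec S))

lemma star_spec (T : adjAlg H) : IsAdj μ T.1 (star T).1 := adjStar_spec T

lemma star_eq' {T S : adjAlg H} (h : IsAdj μ T.1 S.1) : star T = S := adjStar_eq h

instance : StarModule ℂ (adjAlg H) where
  star_smul c T := star_eq' ((star_spec T).smul H c)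

instance : CStarRing (adjAlg H) where
  norm_mul_self_le T := by
    have hT := star_spec T
    have key : ∀ x, ‖T.1 x‖ ^ 3 ≤ ‖T‖ * ‖star T * T‖ * ‖x‖ ^ 3 := fun x => by
      rw [← H.cube, hT.l, hT.m]
      have h1 : ‖T.1 (μ x x ((star T).1 (T.1 x)))‖ ≤ ‖T.1‖ * ‖μ x x ((star T).1 (T.1 x))‖ :=
        T.1.le_opNorm _
      have h2 := H.bd x x ((star T).1 (T.1 x))
      have h3 : ‖(star T).1 (T.1 x)‖ ≤ ‖star T * T‖ * ‖x‖ := (star T * T).1.le_opNorm x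
      calc _ ≤ _ := h1
        _ ≤ ‖T.1‖ * (‖x‖ * ‖x‖ * (‖star T * T‖ * ‖x‖)) := by gcongr; exact h2.trans (by gcongr)
        _ = _ := by rw [show ‖T.1‖ = ‖T‖ from rfl]; ring
    rcases eq_or_lt_of_le (norm_nonneg T) with h0 | h0
    · rw [← h0, zero_mul]; exact norm_nonneg _
    set c := ‖T‖ * ‖star T * T‖ with hc
    have hc0 : 0 ≤ c := by positivity
    have h4 : ‖T‖ ≤ c ^ ((1:ℝ)/3) := by
      refine T.1.opNorm_le_bound (by positivity) fun x => ?_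
      have h5 : (c ^ ((1:ℝ)/3)) ^ 3 = c := by
        rw [← Real.rpow_natCast, ← Real.rpow_mul hc0]; norm_num
      refine le_of_pow_le_pow_left₀ (n := 3) (by norm_num) (by positivity) ?_
      rw [mul_pow, h5]
      exact key x
    have h6 : ‖T‖ ^ 3 ≤ c := by
      have h5 : (c ^ ((1:ℝ)/3)) ^ 3 = c := by
        rw [← Real.rpow_natCast, ← Real.rpow_mul hc0]; norm_num
      calc ‖T‖ ^ 3 ≤ (c ^ ((1:ℝ)/3)) ^ 3 := by gcongr
        _ = c := h5
    have h7 : ‖T‖ * (‖T‖ * ‖T‖) ≤ ‖T‖ * ‖star T * T‖ := by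
      rw [← hc]; linarith [h6, show ‖T‖ ^ 3 = ‖T‖ * (‖T‖ * ‖T‖) by ring]
    exact le_of_mul_le_mul_left h7 h0

lemma adj_norm_star_le (T : adjAlg H) : ‖star T‖ ≤ ‖T‖ :=
  (CStarRing.to_normedStarGroup (E := adjAlg H)).norm_star_le T

instance [CompleteSpace E] : CompleteSpace (adjAlg H) := by
  refine Metric.complete_of_cauchySeq_tendsto fun u hu => ?_
  have hv : CauchySeq fun n => star (u n) := by
    rw [Metric.cauchySeq_iff] at hu ⊢
    intro ε hε
    obtain ⟨N, hN⟩ := hu ε hε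
    refine ⟨N, fun m hm n hn => ?_⟩
    have := hN m hm n hn
    rw [dist_eq_norm] at this ⊢
    have e : ‖star (u m - u n)‖ ≤ ‖u m - u n‖ := adj_norm_star_le _
    rw [star_sub] at e
    exact lt_of_le_of_lt e this
  have hu' : CauchySeq fun n => (u n).1 := hu.map uniformContinuous_subtype_val
  have hv' : CauchySeq fun n => (star (u n)).1 := hv.map uniformContinuous_subtype_val
  obtain ⟨T, hT⟩ := cauchySeq_tendsto_of_complete hu'
  obtain ⟨S, hS⟩ := cauchySeq_tendsto_of_complete hv'
  have hTx : ∀ x, Filter.Tendsto (fun n => (u n).1 x) Filter.atTop (nhds (T x)) := fun x =>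
    ((ContinuousLinearMap.apply ℂ E x).continuous.tendsto T).comp hT
  have hSx : ∀ x, Filter.Tendsto (fun n => (star (u n)).1 x) Filter.atTop (nhds (S x)) := fun x =>
    ((ContinuousLinearMap.apply ℂ E x).continuous.tendsto S).comp hS
  have hadj : IsAdj μ T S := by
    constructor <;> intro x y z
    · refine tendsto_nhds_unique (((H.cont1 y z).tendsto _).comp (hTx x)) ?_
      exact (hTx (μ x y z)).congr fun n => ((star_spec (u n)).l x y z).symm
    · refine tendsto_nhds_unique (((H.cont1 y z).tendsto _).comp (hSx x)) ?_
      exact (hSx (μ x y z)).congr fun n => ((star_spec (u n)).l' x y z).symm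
    · refine tendsto_nhds_unique (((H.cont2 x z).tendsto _).comp (hTx y)) ?_
      exact (((H.cont3 x y).tendsto _).comp (hSx z)).congr
        fun n => ((star_spec (u n)).m x y z).symm
    · refine tendsto_nhds_unique (((H.cont2 x z).tendsto _).comp (hSx y)) ?_
      exact (((H.cont3 x y).tendsto _).comp (hTx z)).congr
        fun n => ((star_spec (u n)).m' x y z).symm
  exact ⟨⟨T, S, hadj⟩, tendsto_subtype_rng.mpr hT⟩

instance [CompleteSpace E] : CStarAlgebra (adjAlg H) where

/-- left multiplication -/
def lmul (H : IsCT μ) (x : E) : adjAlg H :=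
  ⟨LinearMap.mkContinuous
    { toFun := fun z => μ x x z, map_add' := H.add3 x x, map_smul' := fun c z => H.smul3 c x x z }
    (‖x‖ * ‖x‖) (fun z => H.bd x x z), by
    refine ⟨LinearMap.mkContinuous
    { toFun := fun z => μ x x z, map_add' := H.add3 x x, map_smul' := fun c z => H.smul3 c x x z }
    (‖x‖ * ‖x‖) (fun z => H.bd x x z), ?_⟩
    constructor <;> intro a b c <;> simp [H.assoc1, H.assoc2]⟩

lemma lmul_apply (x z : E) : (lmul H x).1 z = μ x x z := rfl

lemma lmul_norm (x : E) : ‖lmul H x‖ ≤ ‖x‖ * ‖x‖ :=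
  LinearMap.mkContinuous_norm_le _ (by positivity) (fun z => H.bd x x z)

lemma lmul_sa (x : E) : IsSelfAdjoint (lmul H x) :=
  star_eq' (by constructor <;> intro a b c <;> simp [lmul_apply, H.assoc1, H.assoc2])

lemma lmul_cube (x : E) : lmul H (μ x x x) = lmul H x ^ 3 := by
  refine Subtype.ext (ContinuousLinearMap.ext fun z => ?_)
  have : (lmul H x ^ 3).1 z = μ x x (μ x x (μ x x z)) := by
    simp [pow_succ, lmul_apply]
  rw [this, lmul_apply, H.assoc1, H.assoc2, H.assoc2 x x x]

lemma exists_cutoff {A : Type*} [CStarAlgebra A] (j : A) (hj : IsSelfAdjoint j)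
    {ε : ℝ} (hε : 0 < ε) :
    ∃ e k : A, IsSelfAdjoint e ∧ ‖e‖ ≤ 1 ∧ ‖j * e‖ ≤ ε ∧ 1 - e = j * k := by
  have hpos : ∀ t : ℝ, 0 < ε ^ 2 + t ^ 2 := fun t => by positivity
  have hc1 : Continuous fun t : ℝ => ε ^ 2 / (ε ^ 2 + t ^ 2) :=
    continuous_const.div (by fun_prop) fun t => (hpos t).ne'
  have hc2 : Continuous fun t : ℝ => t / (ε ^ 2 + t ^ 2) :=
    continuous_id.div (by fun_prop) fun t => (hpos t).ne'
  refine ⟨cfc (fun t : ℝ => ε ^ 2 / (ε ^ 2 + t ^ 2)) j, cfc (fun t : ℝ => t / (ε ^ 2 + t ^ 2)) j,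
    cfc_predicate _ _, ?_, ?_, ?_⟩
  · refine norm_cfc_le zero_le_one fun t _ => ?_
    rw [Real.norm_eq_abs, abs_of_nonneg (by positivity), div_le_one (hpos t)]
    nlinarith [sq_nonneg t]
  · nth_rewrite 1 [← cfc_id' ℝ j]
    rw [← cfc_mul (fun t : ℝ => t) _ j (by fun_prop) hc1.continuousOn]
    refine norm_cfc_le hε.le fun t _ => ?_
    rw [Real.norm_eq_abs, ← mul_div_assoc, abs_div, abs_of_pos (hpos t), div_le_iff₀ (hpos t),
      abs_mul, abs_of_pos (pow_pos hε 2)]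
    have := sq_abs t
    have h2 : |t| * ε ≤ ε ^ 2 + t ^ 2 := by nlinarith [sq_nonneg (|t| - ε), sq_nonneg (|t| + ε)]
    nlinarith
  · nth_rewrite 2 [← cfc_id' ℝ j]
    rw [← cfc_mul (fun t : ℝ => t) _ j (by fun_prop) hc2.continuousOn, ← cfc_one ℝ j,
      ← cfc_sub (1 : ℝ → ℝ) _ j continuousOn_const hc1.continuousOn]
    refine cfc_congr fun t _ => ?_
    have := (hpos t).ne'
    simp only [Pi.one_apply]
    field_simp
    ring

lemma norm_cube_le {A : Type*} [CStarAlgebra A] (l e : A) (hl : IsSelfAdjoint l)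
    (he : IsSelfAdjoint e) (he1 : ‖e‖ ≤ 1) : ‖l * e‖ ^ 3 ≤ ‖l ^ 3 * e‖ := by
  have hs : ∀ n : ℕ, star (l ^ n * e) = e * l ^ n := fun n => by
    rw [star_mul, he.star_eq, star_pow, hl.star_eq]
  have h1 : ‖l * e‖ * ‖l * e‖ ≤ ‖l ^ 2 * e‖ := by
    have := hs 1
    rw [pow_one] at this
    rw [← CStarRing.norm_star_mul_self, this]
    calc ‖e * l * (l * e)‖ = ‖e * (l ^ 2 * e)‖ := by simp only [pow_two, mul_assoc]
      _ ≤ ‖e‖ * ‖l ^ 2 * e‖ := norm_mul_le _ _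
      _ ≤ 1 * ‖l ^ 2 * e‖ := by gcongr
      _ = _ := one_mul _
  have h2 : ‖l ^ 2 * e‖ * ‖l ^ 2 * e‖ ≤ ‖l * e‖ * ‖l ^ 3 * e‖ := by
    rw [← CStarRing.norm_star_mul_self, hs 2]
    have := hs 1
    rw [pow_one] at this
    calc ‖e * l ^ 2 * (l ^ 2 * e)‖ = ‖star (l * e) * (l ^ 3 * e)‖ := by
          rw [this]; simp only [pow_succ, pow_zero, one_mul, mul_assoc]
      _ ≤ ‖star (l * e)‖ * ‖l ^ 3 * e‖ := norm_mul_le _ _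
      _ = _ := by rw [norm_star]
  rcases eq_or_lt_of_le (norm_nonneg (l * e)) with h0 | h0
  · rw [← h0]; simp
  · have h3 : (‖l * e‖ * ‖l * e‖) * (‖l * e‖ * ‖l * e‖) ≤ ‖l ^ 2 * e‖ * ‖l ^ 2 * e‖ := by gcongr
    refine le_of_mul_le_mul_left ?_ h0
    calc _ = (‖l * e‖ * ‖l * e‖) * (‖l * e‖ * ‖l * e‖) := by ring
      _ ≤ _ := h3.trans h2

lemma quot_key [CompleteSpace E] (H : IsCT μ) (F : Submodule ℂ E)
    (hF : ∀ x y z : E,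
      (x ∈ F → μ x y z ∈ F) ∧ (y ∈ F → μ x y z ∈ F) ∧ (z ∈ F → μ x y z ∈ F))
    (x w : E) (hw : w - μ x x x ∈ F) {ε : ℝ} (hε : 0 < ε) :
    ‖(Submodule.Quotient.mk x : E ⧸ F)‖ ^ 6 ≤ ‖w‖ ^ 2 + ε := by
  set l := lmul H x with hl
  set p := lmul H w with hp
  have hjsa : IsSelfAdjoint (l ^ 3 - p) := ((lmul_sa (H := H) x).pow 3).sub (lmul_sa w)
  have hjF : ∀ z, (l ^ 3 - p).1 z ∈ F := fun z => by
    rw [hl, hp, ← lmul_cube]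
    set m := μ x x x
    obtain ⟨f, hf, rfl⟩ : ∃ f ∈ F, w = m + f := ⟨w - m, hw, by abel⟩
    have : (lmul H m - lmul H (m + f)).1 z = -(μ m f z + μ f m z + μ f f z) := by
      have : (lmul H m - lmul H (m + f)).1 z = μ m m z - μ (m + f) (m + f) z := rfl
      rw [this, H.add1, H.add2, H.add2]; abel
    rw [this]
    exact F.neg_mem (F.add_mem (F.add_mem ((hF _ _ _).2.1 hf) ((hF _ _ _).1 hf)) ((hF _ _ _).1 hf))
  obtain ⟨e, k, hesa, he1, hje, hek⟩ := exists_cutoff (l ^ 3 - p) hjsa hε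
  have hxe : x - e.1 x ∈ F := by
    have : x - e.1 x = (l ^ 3 - p).1 (k.1 x) := by
      change (1 - e).1 x = ((l ^ 3 - p) * k).1 x
      rw [hek]
    rw [this]; exact hjF _
  have hq : ‖(Submodule.Quotient.mk x : E ⧸ F)‖ ≤ ‖e.1 x‖ := by
    rw [(Submodule.Quotient.eq F).mpr hxe]
    exact Submodule.Quotient.norm_mk_le F _
  have hes := star_spec e
  rw [hesa.star_eq] at hes
  have h2 : ‖e.1 x‖ ^ 2 ≤ ‖l * e‖ := by
    have h3 : ‖e.1 x‖ ^ 3 ≤ ‖l * e‖ * ‖e.1 x‖ := by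
      rw [← H.cube, hes.l, hes.m]
      calc ‖e.1 (μ x x (e.1 (e.1 x)))‖ ≤ ‖e‖ * ‖(l * e).1 (e.1 x)‖ := e.1.le_opNorm _
        _ ≤ 1 * (‖l * e‖ * ‖e.1 x‖) := by gcongr; exact (l * e).1.le_opNorm _
        _ = _ := one_mul _
    rcases eq_or_lt_of_le (norm_nonneg (e.1 x)) with h0 | h0
    · rw [← h0]; simp
    · refine le_of_mul_le_mul_right ?_ h0
      calc _ = ‖e.1 x‖ ^ 3 := by ring
        _ ≤ _ := h3
  calc ‖(Submodule.Quotient.mk x : E ⧸ F)‖ ^ 6 ≤ ‖e.1 x‖ ^ 6 := by gcongr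
    _ = (‖e.1 x‖ ^ 2) ^ 3 := by ring
    _ ≤ ‖l * e‖ ^ 3 := by gcongr
    _ ≤ ‖l ^ 3 * e‖ := norm_cube_le l e (lmul_sa x) hesa he1
    _ = ‖p * e + (l ^ 3 - p) * e‖ := by rw [← add_mul]; congr 2; abel
    _ ≤ ‖p‖ * ‖e‖ + ‖(l ^ 3 - p) * e‖ := (norm_add_le _ _).trans (by gcongr; exact norm_mul_le _ _)
    _ ≤ (‖w‖ * ‖w‖) * 1 + ε := by gcongr; exact lmul_norm w
    _ = _ := by ring

end helpers

/-- Let `E` be a `C*`-ternary ring and `F` a closed ideal of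
`E`.  Then the quotient `E/F` with the induced ternary product and the
quotient norm is again a `C*`-ternary ring; in particular the quotient norm is
a `C*`-norm for the induced ternary product. -/
theorem stmt_18 {E : Type*} [NormedAddCommGroup E] [NormedSpace ℂ E]
    [CompleteSpace E]
    (μ : E → E → E → E) (h : IsTernaryProduct μ)
    (hn : (∀ x y z : E, ‖μ x y z‖ ≤ ‖x‖ * ‖y‖ * ‖z‖) ∧
      ∀ x : E, ‖μ x x x‖ = ‖x‖ ^ 3)
    (F : Submodule ℂ E) (hFclosed : IsClosed (F : Set E))
    (hF : ∀ x y z : E,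
      (x ∈ F → μ x y z ∈ F) ∧ (y ∈ F → μ x y z ∈ F) ∧ (z ∈ F → μ x y z ∈ F)) :
    ∃ μq : (E ⧸ F) → (E ⧸ F) → (E ⧸ F) → E ⧸ F,
      -- `μq` is the induced ternary product on the quotient …
      (∀ x y z : E,
        μq (Submodule.Quotient.mk x) (Submodule.Quotient.mk y)
            (Submodule.Quotient.mk z) = Submodule.Quotient.mk (μ x y z)) ∧
      IsTernaryProduct μq ∧
      -- … the quotient norm `‖x + F‖ = inf{‖x + f‖ : f ∈ F}` is a `C*`-norm
      -- for it …
      (∀ x : E, ‖(Submodule.Quotient.mk x : E ⧸ F)‖ =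
        sInf {s : ℝ | ∃ f ∈ F, s = ‖x + f‖}) ∧
      (∀ a b c : E ⧸ F, ‖μq a b c‖ ≤ ‖a‖ * ‖b‖ * ‖c‖) ∧
      (∀ a : E ⧸ F, ‖μq a a a‖ = ‖a‖ ^ 3) ∧
      (∀ a : E ⧸ F, ‖a‖ = 0 → a = 0) ∧
      -- … and the quotient is a Banach space
      CompleteSpace (E ⧸ F) := by
  have H : IsCT μ := ⟨h, hn.1, hn.2⟩
  have hsurj := Submodule.Quotient.mk_surjective F
  let μq : (E ⧸ F) → (E ⧸ F) → (E ⧸ F) → E ⧸ F := fun a b c =>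
    Submodule.Quotient.mk (μ (Function.surjInv hsurj a) (Function.surjInv hsurj b)
      (Function.surjInv hsurj c))
  have wd : ∀ x y z x' y' z' : E, x - x' ∈ F → y - y' ∈ F → z - z' ∈ F →
      (Submodule.Quotient.mk (μ x y z) : E ⧸ F) = Submodule.Quotient.mk (μ x' y' z') := by
    intro x y z x' y' z' hx hy hz
    rw [Submodule.Quotient.eq]
    have : μ x y z - μ x' y' z' = μ (x - x') y z + μ x' (y - y') z + μ x' y' (z - z') := by
      have e1 := H.add1 (x - x') x' y z
      have e2 := H.add2 x' (y - y') y' z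
      have e3 := H.add3 x' y' (z - z') z'
      rw [sub_add_cancel] at e1 e2 e3
      rw [e1, e2, e3]; abel
    rw [this]
    exact F.add_mem (F.add_mem ((hF _ _ _).1 hx) ((hF _ _ _).2.1 hy)) ((hF _ _ _).2.2 hz)
  have hmk : ∀ x y z : E,
        μq (Submodule.Quotient.mk x) (Submodule.Quotient.mk y)
            (Submodule.Quotient.mk z) = Submodule.Quotient.mk (μ x y z) := by
    intro x y z
    have hs : ∀ x : E, Function.surjInv hsurj (Submodule.Quotient.mk x) - x ∈ F := fun x =>
      (Submodule.Quotient.eq F).mp (Function.surjInv_eq hsurj _)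
    exact wd _ _ _ _ _ _ (hs x) (hs y) (hs z)
  clear_value μq
  have hbd : ∀ a b c : E ⧸ F, ‖μq a b c‖ ≤ ‖a‖ * ‖b‖ * ‖c‖ := by
    intro a b c
    have hlim : Filter.Tendsto (fun ε : ℝ => (‖a‖ + ε) * (‖b‖ + ε) * (‖c‖ + ε))
        (nhdsWithin 0 (Set.Ioi 0)) (nhds (‖a‖ * ‖b‖ * ‖c‖)) := by
      have : Continuous (fun ε : ℝ => (‖a‖ + ε) * (‖b‖ + ε) * (‖c‖ + ε)) := by fun_prop
      have := this.tendsto 0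
      simp only [add_zero] at this
      exact this.mono_left nhdsWithin_le_nhds
    refine ge_of_tendsto hlim ?_
    filter_upwards [self_mem_nhdsWithin] with ε hε
    obtain ⟨x, rfl, hx⟩ := Submodule.Quotient.norm_mk_lt a hε
    obtain ⟨y, rfl, hy⟩ := Submodule.Quotient.norm_mk_lt b hε
    obtain ⟨z, rfl, hz⟩ := Submodule.Quotient.norm_mk_lt c hε
    have hε' : (0 : ℝ) < ε := hε
    rw [hmk]
    refine (Submodule.Quotient.norm_mk_le F _).trans ((H.bd x y z).trans ?_)
    gcongr
  refine ⟨μq, hmk, ?_, ?_, hbd, ?_, ?_, inferInstance⟩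
  · refine ⟨?_, ?_, ?_, ?_, ?_, ?_, ?_, ?_⟩
    · intro a a' b c
      obtain ⟨x, rfl⟩ := hsurj a
      obtain ⟨x', rfl⟩ := hsurj a'
      obtain ⟨y, rfl⟩ := hsurj b
      obtain ⟨z, rfl⟩ := hsurj c
      rw [← Submodule.Quotient.mk_add, hmk, hmk, hmk, H.add1, Submodule.Quotient.mk_add]
    · intro t a b c
      obtain ⟨x, rfl⟩ := hsurj a
      obtain ⟨y, rfl⟩ := hsurj b
      obtain ⟨z, rfl⟩ := hsurj c
      rw [← Submodule.Quotient.mk_smul, hmk, hmk, H.smul1, Submodule.Quotient.mk_smul]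
    · intro a b b' c
      obtain ⟨x, rfl⟩ := hsurj a
      obtain ⟨x', rfl⟩ := hsurj b'
      obtain ⟨y, rfl⟩ := hsurj b
      obtain ⟨z, rfl⟩ := hsurj c
      rw [← Submodule.Quotient.mk_add, hmk, hmk, hmk, H.add2, Submodule.Quotient.mk_add]
    · intro t a b c
      obtain ⟨x, rfl⟩ := hsurj a
      obtain ⟨y, rfl⟩ := hsurj b
      obtain ⟨z, rfl⟩ := hsurj c
      rw [← Submodule.Quotient.mk_smul, hmk, hmk, H.smul2, Submodule.Quotient.mk_smul]
    · intro a b c c'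
      obtain ⟨x, rfl⟩ := hsurj a
      obtain ⟨x', rfl⟩ := hsurj c'
      obtain ⟨y, rfl⟩ := hsurj b
      obtain ⟨z, rfl⟩ := hsurj c
      rw [← Submodule.Quotient.mk_add, hmk, hmk, hmk, H.add3, Submodule.Quotient.mk_add]
    · intro t a b c
      obtain ⟨x, rfl⟩ := hsurj a
      obtain ⟨y, rfl⟩ := hsurj b
      obtain ⟨z, rfl⟩ := hsurj c
      rw [← Submodule.Quotient.mk_smul, hmk, hmk, H.smul3, Submodule.Quotient.mk_smul]
    · intro a b c d e
      obtain ⟨x, rfl⟩ := hsurj a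
      obtain ⟨y, rfl⟩ := hsurj b
      obtain ⟨z, rfl⟩ := hsurj c
      obtain ⟨u, rfl⟩ := hsurj d
      obtain ⟨v, rfl⟩ := hsurj e
      rw [hmk, hmk, hmk, hmk, H.assoc1]
    · intro a b c d e
      obtain ⟨x, rfl⟩ := hsurj a
      obtain ⟨y, rfl⟩ := hsurj b
      obtain ⟨z, rfl⟩ := hsurj c
      obtain ⟨u, rfl⟩ := hsurj d
      obtain ⟨v, rfl⟩ := hsurj e
      rw [hmk, hmk, hmk, hmk, H.assoc2]
  · intro x
    symm
    refine IsGLB.csInf_eq ⟨?_, ?_⟩ ⟨_, 0, F.zero_mem, rfl⟩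
    · rintro _ ⟨f, hf, rfl⟩
      have : (Submodule.Quotient.mk x : E ⧸ F) = Submodule.Quotient.mk (x + f) := by
        rw [Submodule.Quotient.eq]; simpa using hf
      rw [this]
      exact Submodule.Quotient.norm_mk_le F _
    · intro r hr
      refine le_of_forall_pos_le_add fun ε hε => ?_
      obtain ⟨y, hy, hy'⟩ := Submodule.Quotient.norm_mk_lt (Submodule.Quotient.mk x : E ⧸ F) hε
      refine (hr ⟨y - x, (Submodule.Quotient.eq F).mp hy, rfl⟩).trans ?_
      rw [add_sub_cancel]
      exact hy'.le
  · intro a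
    refine le_antisymm ((hbd a a a).trans (le_of_eq (by ring))) ?_
    obtain ⟨x, rfl⟩ := hsurj a
    rw [hmk]
    set q := ‖(Submodule.Quotient.mk (μ x x x) : E ⧸ F)‖ with hq
    have h6 : ‖(Submodule.Quotient.mk x : E ⧸ F)‖ ^ 6 ≤ q ^ 2 := by
      have hlim : Filter.Tendsto (fun ε : ℝ => (q + ε) ^ 2 + ε)
          (nhdsWithin 0 (Set.Ioi 0)) (nhds (q ^ 2)) := by
        have : Continuous (fun ε : ℝ => (q + ε) ^ 2 + ε) := by fun_prop
        have := this.tendsto 0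
        simp only [add_zero] at this
        exact this.mono_left nhdsWithin_le_nhds
      refine ge_of_tendsto hlim ?_
      filter_upwards [self_mem_nhdsWithin] with ε hε
      obtain ⟨w, hw, hw'⟩ :=
        Submodule.Quotient.norm_mk_lt (Submodule.Quotient.mk (μ x x x) : E ⧸ F) hε
      refine (quot_key H F hF x w ((Submodule.Quotient.eq F).mp hw) hε).trans ?_
      gcongr
    refine le_of_pow_le_pow_left₀ (n := 2) (by norm_num) (norm_nonneg _) ?_
    calc _ = ‖(Submodule.Quotient.mk x : E ⧸ F)‖ ^ 6 := by ring
      _ ≤ _ := h6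
  · intro a ha
    obtain ⟨x, rfl⟩ := hsurj a
    have : x ∈ closure (F : Set E) :=
      (QuotientAddGroup.norm_mk_eq_zero_iff_mem_closure (S := F.toAddSubgroup)).mp ha
    rw [hFclosed.closure_eq] at this
    exact (Submodule.Quotient.mk_eq_zero F).mpr this
end
end

section
/- Let (E, A, ⟨·,·⟩) be a full C*-basic triple. For a closed subspace F of E let F^r denote the closure in A of span{⟨x,y⟩ : x,y ∈ F}, and for a closed subset B of A let EB denote the closure in E of span{xb : x ∈ E, b ∈ B}. Then the map F ↦ F^r is an inclusion-preserving bijection from the set of left ideals of E (closed subspaces F with μ(E,E,F) ⊆ F) onto the set of hereditary C*-subalgebras of A, with inverse B ↦ EB; moreover this map restricts to an inclusion-preserving bijection from the set of two-sided ideals of E onto the set of closed two-sided ideals of A. -/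
noncomputable section

open scoped ComplexConjugate

/-- A (right) basic triple `(E, A, ⟪·,·⟫)`: a right module `E` over a complex
`*`-algebra `A`, together with an `A`-valued pairing which is conjugate-linear
in the first variable and linear in the second one, compatible with the module
structure and the involution. -/
structure BasicTriple (E A : Type*) [AddCommGroup E] [Module ℂ E]
    [NonUnitalRing A] [Module ℂ A] [StarRing A] where
  act : E → A → E
  inner : E → E → A
  act_add_left : ∀ (x y : E) (a : A), act (x + y) a = act x a + act y a
  act_add_right : ∀ (x : E) (a b : A), act x (a + b) = act x a + act x b
  act_smul_left : ∀ (c : ℂ) (x : E) (a : A), act (c • x) a = c • act x a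
  act_smul_right : ∀ (c : ℂ) (x : E) (a : A), act x (c • a) = c • act x a
  act_mul : ∀ (x : E) (a b : A), act (act x a) b = act x (a * b)
  inner_add_left : ∀ x y z : E, inner (x + y) z = inner x z + inner y z
  inner_add_right : ∀ x y z : E, inner x (y + z) = inner x y + inner x z
  inner_smul_left : ∀ (c : ℂ) (x y : E), inner (c • x) y = conj c • inner x y
  inner_smul_right : ∀ (c : ℂ) (x y : E), inner x (c • y) = c • inner x y
  inner_mul : ∀ (x y : E) (a : A), inner x y * a = inner x (act y a)
  star_inner : ∀ x y : E, star (inner x y) = inner y x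

variable {E A : Type*} [AddCommGroup E] [Module ℂ E]
    [NonUnitalRing A] [Module ℂ A] [StarRing A]

/-- The ternary product associated with a basic triple: `μ(x,y,z) = x⟪y,z⟫`. -/
def BasicTriple.mu (t : BasicTriple E A) (x y z : E) : E := t.act x (t.inner y z)

/-- The basic triple is full: `A = span{⟪x,y⟫ : x, y ∈ E}`. -/
def BasicTriple.Full (t : BasicTriple E A) : Prop :=
  Submodule.span ℂ {a : A | ∃ x y : E, t.inner x y = a} = ⊤

/-- `E` is a faithful `A`-module. -/
def BasicTriple.Faithful (t : BasicTriple E A) : Prop :=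
  ∀ a : A, (∀ x : E, t.act x a = 0) → a = 0

/-- A `C*`-basic triple: a basic triple in which `A` is a `C*`-algebra, `E`
with the associated ternary product is a `C*`-ternary ring, `E` is a Banach
right `A`-module and the pairing is continuous. -/
structure CStarBasicTriple (E A : Type*) [NormedAddCommGroup E] [NormedSpace ℂ E]
    [NonUnitalNormedRing A] [NormedSpace ℂ A] [StarRing A] [CStarRing A]
    extends BasicTriple E A where
  norm_triple_le : ∀ x y z : E, ‖act x (inner y z)‖ ≤ ‖x‖ * ‖y‖ * ‖z‖
  norm_triple_self : ∀ x : E, ‖act x (inner x x)‖ = ‖x‖ ^ 3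
  norm_act_le : ∀ (x : E) (a : A), ‖act x a‖ ≤ ‖x‖ * ‖a‖
  continuous_inner : Continuous fun p : E × E => inner p.1 p.2

section Statement19

variable {E' A' : Type*} [NormedAddCommGroup E'] [NormedSpace ℂ E']
    [NonUnitalNormedRing A'] [NormedSpace ℂ A'] [StarRing A'] [CStarRing A']

/-- `Fʳ`: the closure in `A` of `span{⟪x,y⟫ : x, y ∈ F}`. -/
def rOf (t : CStarBasicTriple E' A') (F : Set E') : Set A' :=
  closure ((Submodule.span ℂ
    {a : A' | ∃ x ∈ F, ∃ y ∈ F, t.inner x y = a} : Submodule ℂ A') : Set A')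

/-- `EB`: the closure in `E` of `span{xb : x ∈ E, b ∈ B}`. -/
def modOf (t : CStarBasicTriple E' A') (B : Set A') : Set E' :=
  closure ((Submodule.span ℂ
    {x : E' | ∃ y : E', ∃ b ∈ B, t.act y b = x} : Submodule ℂ E') : Set E')

/-- `F` is a left ideal of the `C*`-tring `E`: a closed subspace with
`μ(E,E,F) ⊆ F`. -/
def IsLeftIdealTring (t : CStarBasicTriple E' A') (F : Set E') : Prop :=
  IsClosed F ∧ (0 : E') ∈ F ∧ (∀ x ∈ F, ∀ y ∈ F, x + y ∈ F) ∧
    (∀ (c : ℂ), ∀ x ∈ F, c • x ∈ F) ∧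
    ∀ (x y : E'), ∀ z ∈ F, t.act x (t.inner y z) ∈ F

/-- `F` is a two-sided ideal of the `C*`-tring `E`: a left ideal which also
satisfies `μ(F,E,E) ⊆ F`. -/
def IsIdealTring (t : CStarBasicTriple E' A') (F : Set E') : Prop :=
  IsLeftIdealTring t F ∧ ∀ x ∈ F, ∀ y z : E', t.act x (t.inner y z) ∈ F

/-- `B` is a hereditary `C*`-subalgebra of `A`: a closed `*`-subalgebra with
`BAB ⊆ B`. -/
def IsHereditarySubalg (B : Set A') : Prop :=
  IsClosed B ∧ (0 : A') ∈ B ∧ (∀ a ∈ B, ∀ b ∈ B, a + b ∈ B) ∧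
    (∀ (c : ℂ), ∀ a ∈ B, c • a ∈ B) ∧ (∀ a ∈ B, ∀ b ∈ B, a * b ∈ B) ∧
    (∀ a ∈ B, star a ∈ B) ∧ ∀ a ∈ B, ∀ c : A', ∀ b ∈ B, a * c * b ∈ B

/-- `B` is a closed two-sided ideal of `A`. -/
def IsClosedTwoSidedIdealAlg (B : Set A') : Prop :=
  IsClosed B ∧ (0 : A') ∈ B ∧ (∀ a ∈ B, ∀ b ∈ B, a + b ∈ B) ∧
    (∀ (c : ℂ), ∀ a ∈ B, c • a ∈ B) ∧
    ∀ (a : A'), ∀ b ∈ B, a * b ∈ B ∧ b * a ∈ B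

theorem aux_clo_ind {V : Type*} [NormedAddCommGroup V] [NormedSpace ℂ V] {s : Set V}
    {p : V → Prop} (hc : IsClosed {x | p x}) (h0 : p 0)
    (hadd : ∀ x y, p x → p y → p (x + y)) (hsmul : ∀ (c : ℂ) x, p x → p (c • x))
    (hs : ∀ x ∈ s, p x) {x : V}
    (hx : x ∈ closure ((Submodule.span ℂ s : Submodule ℂ V) : Set V)) : p x := by
  refine closure_minimal (t := {x | p x}) ?_ hc hx
  intro y hy
  exact Submodule.span_induction (p := fun y _ => p y) hs h0
    (fun a b _ _ ha hb => hadd a b ha hb) (fun c a _ ha => hsmul c a ha) hy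

theorem aux_clo_add {V : Type*} [NormedAddCommGroup V] [NormedSpace ℂ V] {s : Set V} {x y : V}
    (hx : x ∈ closure ((Submodule.span ℂ s : Submodule ℂ V) : Set V))
    (hy : y ∈ closure ((Submodule.span ℂ s : Submodule ℂ V) : Set V)) :
    x + y ∈ closure ((Submodule.span ℂ s : Submodule ℂ V) : Set V) :=
  (Submodule.span ℂ s).topologicalClosure.add_mem hx hy

theorem aux_clo_smul {V : Type*} [NormedAddCommGroup V] [NormedSpace ℂ V] {s : Set V} (c : ℂ)
    {x : V} (hx : x ∈ closure ((Submodule.span ℂ s : Submodule ℂ V) : Set V)) :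
    c • x ∈ closure ((Submodule.span ℂ s : Submodule ℂ V) : Set V) :=
  (Submodule.span ℂ s).topologicalClosure.smul_mem c hx

theorem aux_clo_zero {V : Type*} [NormedAddCommGroup V] [NormedSpace ℂ V] {s : Set V} :
    (0 : V) ∈ closure ((Submodule.span ℂ s : Submodule ℂ V) : Set V) :=
  (Submodule.span ℂ s).topologicalClosure.zero_mem

theorem aux_clo_sub {V : Type*} [NormedAddCommGroup V] [NormedSpace ℂ V] {s : Set V} {x : V}
    (hx : x ∈ s) : x ∈ closure ((Submodule.span ℂ s : Submodule ℂ V) : Set V) :=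
  subset_closure (Submodule.subset_span hx)

theorem aux_approx0 {C : Type*} [NonUnitalCStarAlgebra C] (S : NonUnitalStarSubalgebra ℂ C)
    (hS : IsClosed (S : Set C)) {a : C} (ha : a ∈ S) (hsa : star a = a) {δ : ℝ} (hδ : 0 < δ) :
    ∃ p ∈ S, star p = p ∧ ‖p‖ ≤ 1 ∧ ‖a * p - a‖ ≤ δ := by
  have hsa' : IsSelfAdjoint a := hsa
  set f : ℝ → ℝ := fun t => t ^ 2 / (t ^ 2 + δ ^ 2) with hf
  have hpos : ∀ t : ℝ, 0 < t ^ 2 + δ ^ 2 := fun t => by positivity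
  have hfc : Continuous f := by
    refine Continuous.div (by fun_prop) (by fun_prop) (fun t => (hpos t).ne')
  have hf0 : f 0 = 0 := by simp [hf]
  have hfon : ContinuousOn f (quasispectrum ℝ a) := hfc.continuousOn
  refine ⟨cfcₙ f a, ?_, ?_, ?_, ?_⟩
  · exact cfcₙ_mem (𝕜' := ℂ) (hs := hS) f ha
  · exact (cfcₙ_predicate f a : IsSelfAdjoint _)
  · refine norm_cfcₙ_le fun t _ => ?_
    rw [Real.norm_eq_abs, abs_of_nonneg (by positivity), div_le_one (hpos t)]
    nlinarith [sq_nonneg δ]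
  · have h1 : a * cfcₙ f a - a = cfcₙ (fun t => t * f t - t) a := by
      rw [cfcₙ_sub (fun t => t * f t) (fun t => t) a (by fun_prop) (by simp) (by fun_prop) rfl,
        cfcₙ_mul (fun t => t) f a (by fun_prop) rfl hfon hf0, cfcₙ_id' ℝ a]
    rw [h1]
    refine norm_cfcₙ_le fun t _ => ?_
    have h2 : t * f t - t = - (t * δ ^ 2) / (t ^ 2 + δ ^ 2) := by
      have := (hpos t).ne'
      simp only [hf]; field_simp; ring
    rw [h2, Real.norm_eq_abs, abs_div, abs_of_pos (hpos t), div_le_iff₀ (hpos t), abs_neg, abs_mul,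
      abs_of_nonneg (sq_nonneg δ)]
    have h3 := sq_abs t
    nlinarith [sq_nonneg (|t| - δ), abs_nonneg t, mul_nonneg hδ.le (sq_nonneg (|t| - δ)),
      mul_nonneg (abs_nonneg t) (sq_nonneg δ), mul_nonneg hδ.le (sq_nonneg |t|),
      mul_nonneg hδ.le (sq_nonneg δ)]

theorem aux_approx {C : Type*} [NonUnitalNormedRing C] [NormedSpace ℂ C] [StarRing C]
    [CStarRing C] [CompleteSpace C] [StarModule ℂ C] [IsScalarTower ℂ C C] [SMulCommClass ℂ C C]
    {B : Set C} (hc : IsClosed B) (h0 : (0 : C) ∈ B) (hadd : ∀ a ∈ B, ∀ b ∈ B, a + b ∈ B)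
    (hsm : ∀ (c : ℂ), ∀ a ∈ B, c • a ∈ B) (hmul : ∀ a ∈ B, ∀ b ∈ B, a * b ∈ B)
    (hst : ∀ a ∈ B, star a ∈ B) {a : C} (ha : a ∈ B) (hsa : star a = a) {δ : ℝ} (hδ : 0 < δ) :
    ∃ p ∈ B, star p = p ∧ ‖p‖ ≤ 1 ∧ ‖a * p - a‖ ≤ δ := by
  letI : NonUnitalCStarAlgebra C := {}
  let S : NonUnitalStarSubalgebra ℂ C :=
    { carrier := B
      add_mem' := fun {a b} ha hb => hadd a ha b hb
      zero_mem' := h0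
      mul_mem' := fun {a b} ha hb => hmul a ha b hb
      smul_mem' := fun c {a} ha => hsm c a ha
      star_mem' := fun {a} ha => hst a ha }
  exact aux_approx0 S hc ha hsa hδ

theorem aux_norm_two {C : Type*} [NonUnitalNormedRing C] {p d : C} {δ : ℝ} (hp : ‖p‖ ≤ 1)
    (hd : ‖d‖ ≤ δ) : ‖p * d - d‖ ≤ 2 * δ := by
  have h1 : ‖p * d‖ ≤ 1 * δ := (norm_mul_le _ _).trans
    (mul_le_mul hp hd (norm_nonneg _) zero_le_one)
  have h2 := norm_sub_le (p * d) d
  linarith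

theorem aux_cont_right (t : CStarBasicTriple E' A') (x : E') : Continuous (fun a => t.act x a) := by
  let f : A' →ₗ[ℂ] E' :=
    { toFun := fun a => t.act x a
      map_add' := fun a b => t.act_add_right x a b
      map_smul' := fun c a => t.act_smul_right c x a }
  exact (f.mkContinuous ‖x‖ (fun a => t.norm_act_le x a)).continuous

theorem aux_cont_left (t : CStarBasicTriple E' A') (a : A') : Continuous (fun x => t.act x a) := by
  let f : E' →ₗ[ℂ] E' :=
    { toFun := fun x => t.act x a
      map_add' := fun x y => t.act_add_left x y a
      map_smul' := fun c x => t.act_smul_left c x a }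
  exact (f.mkContinuous ‖a‖ (fun x => (t.norm_act_le x a).trans_eq (mul_comm _ _))).continuous

theorem aux_cont_inner_right (t : CStarBasicTriple E' A') (x : E') :
    Continuous (fun y => t.inner x y) :=
  t.continuous_inner.comp (Continuous.prodMk continuous_const continuous_id)

theorem aux_cont_inner_left (t : CStarBasicTriple E' A') (y : E') :
    Continuous (fun x => t.inner x y) :=
  t.continuous_inner.comp (Continuous.prodMk continuous_id continuous_const)

theorem aux_act_zero_right (t : CStarBasicTriple E' A') (x : E') : t.act x 0 = 0 := by
  simpa using t.act_smul_right 0 x 0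

theorem aux_act_zero_left (t : CStarBasicTriple E' A') (a : A') : t.act 0 a = 0 := by
  simpa using t.act_smul_left 0 0 a

theorem aux_act_sub_right (t : CStarBasicTriple E' A') (x : E') (a b : A') :
    t.act x (a - b) = t.act x a - t.act x b := by
  rw [eq_sub_iff_add_eq, ← t.act_add_right, sub_add_cancel]

theorem aux_act_sub_left (t : CStarBasicTriple E' A') (x y : E') (a : A') :
    t.act (x - y) a = t.act x a - t.act y a := by
  rw [eq_sub_iff_add_eq, ← t.act_add_left, sub_add_cancel]

theorem aux_inner_sub_right (t : CStarBasicTriple E' A') (x y z : E') :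
    t.inner x (y - z) = t.inner x y - t.inner x z := by
  rw [eq_sub_iff_add_eq, ← t.inner_add_right, sub_add_cancel]

theorem aux_inner_sub_left (t : CStarBasicTriple E' A') (x y z : E') :
    t.inner (x - y) z = t.inner x z - t.inner y z := by
  rw [eq_sub_iff_add_eq, ← t.inner_add_left, sub_add_cancel]

theorem aux_inner_zero_right (t : CStarBasicTriple E' A') (x : E') : t.inner x 0 = 0 := by
  simpa using t.inner_smul_right 0 x 0

theorem aux_inner_zero_left (t : CStarBasicTriple E' A') (x : E') : t.inner 0 x = 0 := by
  simpa using t.inner_smul_left 0 0 x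

theorem aux_inner_act_left (t : CStarBasicTriple E' A') (x y : E') (a : A') :
    t.inner (t.act x a) y = star a * t.inner x y := by
  rw [← t.star_inner, ← t.inner_mul, star_mul, t.star_inner]

theorem aux_r_hered [CompleteSpace A'] [StarModule ℂ A']
    [IsScalarTower ℂ A' A'] [SMulCommClass ℂ A' A'] (t : CStarBasicTriple E' A') (F : Set E')
    (hF : IsLeftIdealTring t F) : IsHereditarySubalg (rOf t F) := by
  obtain ⟨-, -, -, -, hl⟩ := hF
  -- products `a * c * b` and `a * b`
  have hbase : ∀ a ∈ rOf t F, ∀ u ∈ F, ∀ v ∈ F, a * t.inner u v ∈ rOf t F := by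
    intro a ha u hu v hv
    refine aux_clo_ind (p := fun a => a * t.inner u v ∈ rOf t F)
      (isClosed_closure.preimage (f := fun a => a * t.inner u v) (by fun_prop)) ?_ ?_ ?_ ?_ ha
    · rw [zero_mul]; exact aux_clo_zero
    · intro x y hx hy; rw [add_mul]; exact aux_clo_add hx hy
    · intro c x hx; rw [smul_mul_assoc]; exact aux_clo_smul c hx
    · rintro _ ⟨x, hx, y, hy, rfl⟩
      refine aux_clo_sub ⟨x, hx, t.act y (t.inner u v), hl _ _ _ hv, ?_⟩
      rw [t.inner_mul]
  have hbase2 : ∀ a ∈ rOf t F, ∀ c : A', ∀ u ∈ F, ∀ v ∈ F, a * c * t.inner u v ∈ rOf t F := by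
    intro a ha c u hu v hv
    refine aux_clo_ind (p := fun a => a * c * t.inner u v ∈ rOf t F)
      (isClosed_closure.preimage (f := fun a => a * c * t.inner u v) (by fun_prop)) ?_ ?_ ?_ ?_ ha
    · rw [zero_mul, zero_mul]; exact aux_clo_zero
    · intro x y hx hy; rw [add_mul, add_mul]; exact aux_clo_add hx hy
    · intro k x hx; rw [smul_mul_assoc, smul_mul_assoc]; exact aux_clo_smul k hx
    · rintro _ ⟨x, hx, y, hy, rfl⟩
      refine aux_clo_sub ⟨x, hx, t.act (t.act y c) (t.inner u v), hl _ _ _ hv, ?_⟩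
      rw [t.inner_mul, t.inner_mul]
  refine ⟨isClosed_closure, aux_clo_zero, fun a ha b hb => aux_clo_add ha hb,
    fun c a ha => aux_clo_smul c ha, ?_, ?_, ?_⟩
  · intro a ha b hb
    refine aux_clo_ind (p := fun b => a * b ∈ rOf t F)
      (isClosed_closure.preimage (f := fun b => a * b) (by fun_prop)) ?_ ?_ ?_ ?_ hb
    · rw [mul_zero]; exact aux_clo_zero
    · intro x y hx hy; rw [mul_add]; exact aux_clo_add hx hy
    · intro k x hx; rw [mul_smul_comm]; exact aux_clo_smul k hx
    · rintro _ ⟨x, hx, y, hy, rfl⟩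
      exact hbase a ha x hx y hy
  · intro a ha
    refine aux_clo_ind (p := fun b => star b ∈ rOf t F)
      (isClosed_closure.preimage (f := fun b : A' => star b) (by fun_prop)) ?_ ?_ ?_ ?_ ha
    · rw [star_zero]; exact aux_clo_zero
    · intro x y hx hy; rw [star_add]; exact aux_clo_add hx hy
    · intro k x hx; rw [star_smul]; exact aux_clo_smul _ hx
    · rintro _ ⟨x, hx, y, hy, rfl⟩
      exact aux_clo_sub ⟨y, hy, x, hx, (t.star_inner x y).symm⟩
  · intro a ha c b hb
    refine aux_clo_ind (p := fun b => a * c * b ∈ rOf t F)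
      (isClosed_closure.preimage (f := fun b => a * c * b) (by fun_prop)) ?_ ?_ ?_ ?_ hb
    · rw [mul_zero]; exact aux_clo_zero
    · intro x y hx hy; rw [mul_add]; exact aux_clo_add hx hy
    · intro k x hx; rw [mul_smul_comm]; exact aux_clo_smul k hx
    · rintro _ ⟨x, hx, y, hy, rfl⟩
      exact hbase2 a ha c x hx y hy

theorem aux_mod_left (t : CStarBasicTriple E' A') (B : Set A') :
    IsLeftIdealTring t (modOf t B) := by
  refine ⟨isClosed_closure, aux_clo_zero, fun a ha b hb => aux_clo_add ha hb,
    fun c a ha => aux_clo_smul c ha, ?_⟩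
  intro x y z hz
  refine aux_clo_ind (p := fun z => t.act x (t.inner y z) ∈ modOf t B)
    (isClosed_closure.preimage (f := fun z => t.act x (t.inner y z))
      ((aux_cont_right t x).comp (aux_cont_inner_right t y))) ?_ ?_ ?_ ?_ hz
  · rw [aux_inner_zero_right, aux_act_zero_right]; exact aux_clo_zero
  · intro u v hu hv; rw [t.inner_add_right, t.act_add_right]; exact aux_clo_add hu hv
  · intro k u hu; rw [t.inner_smul_right, t.act_smul_right]; exact aux_clo_smul k hu
  · rintro _ ⟨u, b, hb, rfl⟩
    refine aux_clo_sub ⟨t.act x (t.inner y u), b, hb, ?_⟩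
    rw [t.act_mul, t.inner_mul]

theorem aux_mod_r [CompleteSpace A'] [StarModule ℂ A']
    [IsScalarTower ℂ A' A'] [SMulCommClass ℂ A' A'] (t : CStarBasicTriple E' A') (F : Set E')
    (hF : IsLeftIdealTring t F) : modOf t (rOf t F) = F := by
  obtain ⟨hc, h0, hadd, hsm, hst, hher⟩ := (aux_r_hered t F hF).2
  obtain ⟨fc, f0, fadd, fsm, hl⟩ := hF
  apply Set.Subset.antisymm
  · intro x hx
    refine aux_clo_ind (p := fun x => x ∈ F) fc f0 (fun x y hx hy => fadd x hx y hy)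
      (fun c x hx => fsm c x hx) ?_ hx
    rintro _ ⟨y, b, hb, rfl⟩
    refine aux_clo_ind (p := fun b => t.act y b ∈ F)
      (fc.preimage (aux_cont_right t y)) ?_ ?_ ?_ ?_ hb
    · rw [aux_act_zero_right]; exact f0
    · intro u v hu hv; rw [t.act_add_right]; exact fadd _ hu _ hv
    · intro k u hu; rw [t.act_smul_right]; exact fsm _ _ hu
    · rintro _ ⟨u, hu, v, hv, rfl⟩
      exact hl _ _ _ hv
  · intro z hz
    have hamem : t.inner z z ∈ rOf t F := aux_clo_sub ⟨z, hz, z, hz, rfl⟩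
    refine Metric.mem_closure_iff.2 fun ε hε => ?_
    set δ : ℝ := (ε / 2) ^ 3 / (4 * (‖z‖ + 1)) with hδd
    have hδ : 0 < δ := by positivity
    obtain ⟨p, hpm, hps, hpn, hpd⟩ := aux_approx (B := rOf t F) isClosed_closure hc h0 hadd hsm hst
      hamem (t.star_inner z z) hδ
    refine ⟨t.act z p, Submodule.subset_span ⟨z, p, hpm, rfl⟩, ?_⟩
    set a := t.inner z z with ha
    set w := t.act z p - z with hw
    set d := a * p - a with hd
    have e1 : t.inner w w = p * d - d := by
      rw [hw, aux_inner_sub_right, aux_inner_sub_left, aux_inner_sub_left, aux_inner_act_left,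
        aux_inner_act_left, ← t.inner_mul, hps, hd, ← ha, mul_sub]
      abel
    have e2 : t.act w (t.inner w w) = t.act z (p * (p * d - d) - (p * d - d)) := by
      rw [e1, aux_act_sub_right t z, ← t.act_mul, ← aux_act_sub_left]
    have n1 : ‖p * (p * d - d) - (p * d - d)‖ ≤ 2 * (2 * δ) :=
      aux_norm_two hpn (aux_norm_two hpn hpd)
    have n2 : ‖w‖ ^ 3 ≤ ‖z‖ * (2 * (2 * δ)) := by
      rw [← t.norm_triple_self, e2]
      exact (t.norm_act_le _ _).trans (mul_le_mul_of_nonneg_left n1 (norm_nonneg _))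
    have n3 : ‖z‖ * (2 * (2 * δ)) ≤ (ε / 2) ^ 3 := by
      have : (‖z‖ + 1) * (2 * (2 * δ)) = (ε / 2) ^ 3 := by
        rw [hδd]; field_simp; ring
      nlinarith [norm_nonneg z]
    have n4 : ‖w‖ ≤ ε / 2 := le_of_pow_le_pow_left₀ (by norm_num) (by positivity) (n2.trans n3)
    rw [dist_comm, dist_eq_norm]
    linarith

theorem aux_r_mod [CompleteSpace A'] [StarModule ℂ A']
    [IsScalarTower ℂ A' A'] [SMulCommClass ℂ A' A'] (t : CStarBasicTriple E' A')
    (hfull : Dense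
      ((Submodule.span ℂ {a : A' | ∃ x y : E', t.inner x y = a} : Submodule ℂ A') : Set A'))
    (B : Set A') (hB : IsHereditarySubalg B) : rOf t (modOf t B) = B := by
  obtain ⟨hc, h0, hadd, hsm, hmul, hst, hher⟩ := hB
  apply Set.Subset.antisymm
  · intro a ha
    refine aux_clo_ind (p := fun x => x ∈ B) hc h0 (fun x y hx hy => hadd x hx y hy)
      (fun c x hx => hsm c x hx) ?_ ha
    rintro _ ⟨x, hx, y, hy, rfl⟩
    refine aux_clo_ind (p := fun x => t.inner x y ∈ B)
      (hc.preimage (aux_cont_inner_left t y)) ?_ ?_ ?_ ?_ hx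
    · rw [aux_inner_zero_left]; exact h0
    · intro u v hu hv; rw [t.inner_add_left]; exact hadd _ hu _ hv
    · intro k u hu; rw [t.inner_smul_left]; exact hsm _ _ hu
    rintro _ ⟨u, b, hb, rfl⟩
    refine aux_clo_ind (p := fun y => t.inner (t.act u b) y ∈ B)
      (hc.preimage (aux_cont_inner_right t _)) ?_ ?_ ?_ ?_ hy
    · rw [aux_inner_zero_right]; exact h0
    · intro u v hu hv; rw [t.inner_add_right]; exact hadd _ hu _ hv
    · intro k u hu; rw [t.inner_smul_right]; exact hsm _ _ hu
    rintro _ ⟨v, c, hcB, rfl⟩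
    rw [← t.inner_mul, aux_inner_act_left]
    exact hher _ (hst _ hb) _ _ hcB
  · have key : ∀ b ∈ B, ∀ c ∈ B, ∀ a : A', star b * a * c ∈ rOf t (modOf t B) := by
      intro b hb c hcB a
      refine aux_clo_ind (p := fun a => star b * a * c ∈ rOf t (modOf t B))
        (isClosed_closure.preimage (f := fun a => star b * a * c) (by fun_prop)) ?_ ?_ ?_ ?_
        (hfull a)
      · rw [mul_zero, zero_mul]; exact aux_clo_zero
      · intro x y hx hy; rw [mul_add, add_mul]; exact aux_clo_add hx hy
      · intro k x hx; rw [mul_smul_comm, smul_mul_assoc]; exact aux_clo_smul k hx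
      · rintro _ ⟨x, y, rfl⟩
        refine aux_clo_sub ⟨t.act x b, aux_clo_sub ⟨x, b, hb, rfl⟩, t.act y c,
          aux_clo_sub ⟨y, c, hcB, rfl⟩, ?_⟩
        rw [← t.inner_mul, aux_inner_act_left]
    have keysa : ∀ a ∈ B, star a = a → a ∈ rOf t (modOf t B) := by
      intro a ha hsa
      have hcl : IsClosed (rOf t (modOf t B)) := isClosed_closure
      rw [← hcl.closure_eq]
      refine Metric.mem_closure_iff.2 fun ε hε => ?_
      have hδ : 0 < ε / 3 := by positivity
      obtain ⟨p, hpm, hps, hpn, hpd⟩ := aux_approx hc h0 hadd hsm hmul hst ha hsa hδ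
      refine ⟨p * a * p, ?_, ?_⟩
      · have := key p hpm p hpm a
        rwa [hps] at this
      · have hpd' : ‖p * a - a‖ ≤ ε / 3 := by
          have : star (a * p - a) = p * a - a := by rw [star_sub, star_mul, hps, hsa]
          rw [← this, norm_star]; exact hpd
        have n1 : ‖p * (a * p - a)‖ ≤ 1 * (ε / 3) := (norm_mul_le _ _).trans
          (mul_le_mul hpn hpd (norm_nonneg _) zero_le_one)
        have e : p * a * p - a = p * (a * p - a) + (p * a - a) := by
          rw [mul_sub, mul_assoc]; abel
        rw [dist_comm, dist_eq_norm, e]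
        have := norm_add_le (p * (a * p - a)) (p * a - a)
        linarith
    intro b hb
    have e : b = (1 / 2 : ℂ) • (b + star b)
        + (-Complex.I / 2 : ℂ) • (Complex.I • (b + (-1 : ℂ) • star b)) := by
      rw [smul_smul, smul_add, smul_add, smul_smul,
        show (-Complex.I / 2 * Complex.I : ℂ) = 1 / 2 by
          linear_combination (-1 / 2 : ℂ) * Complex.I_mul_I]
      module
    rw [e]
    refine aux_clo_add (aux_clo_smul _ (keysa _ (hadd _ hb _ (hst _ hb)) ?_))
      (aux_clo_smul _ (keysa _ (hsm _ _ (hadd _ hb _ (hsm _ _ (hst _ hb)))) ?_))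
    · rw [star_add, star_star, add_comm]
    · simp [star_smul]
      abel

theorem aux_ideal_star [CompleteSpace A'] [StarModule ℂ A']
    [IsScalarTower ℂ A' A'] [SMulCommClass ℂ A' A']
    (B : Set A') (hB : IsClosedTwoSidedIdealAlg B) : IsHereditarySubalg B := by
  obtain ⟨hc, h0, hadd, hsm, hid⟩ := hB
  refine ⟨hc, h0, hadd, hsm, fun a _ b hb => (hid a b hb).1, ?_,
    fun a _ c b hb => (hid (a * c) b hb).1⟩
  intro b hb
  rw [← hc.closure_eq]
  refine Metric.mem_closure_iff.2 fun ε hε => ?_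
  set δ : ℝ := (ε / 2) ^ 2 / 2 with hδd
  have hδ : 0 < δ := by positivity
  have hsa : star (star b * b) = star b * b := by rw [star_mul, star_star]
  have ham : star b * b ∈ B := (hid _ b hb).1
  obtain ⟨p, hpm, hps, hpn, hpd⟩ := aux_approx (B := {a | a ∈ B ∧ star a ∈ B})
    (hc.inter (hc.preimage continuous_star)) ⟨h0, by rwa [star_zero]⟩
    (fun a ha b hb => ⟨hadd _ ha.1 _ hb.1, by rw [star_add]; exact hadd _ ha.2 _ hb.2⟩)
    (fun c a ha => ⟨hsm _ _ ha.1, by rw [star_smul]; exact hsm _ _ ha.2⟩)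
    (fun a ha b hb => ⟨(hid _ _ hb.1).1, by rw [star_mul]; exact (hid _ _ ha.2).1⟩)
    (fun a ha => ⟨ha.2, by rw [star_star]; exact ha.1⟩)
    (a := star b * b) ⟨ham, by rwa [hsa]⟩ hsa hδ
  refine ⟨p * star b, (hid _ _ hpm.1).2, ?_⟩
  have e1 : star (b * p - b) * (b * p - b)
      = p * (star b * b * p - star b * b) - (star b * b * p - star b * b) := by
    rw [star_sub, star_mul, hps]
    noncomm_ring
  have n1 : ‖b * p - b‖ * ‖b * p - b‖ ≤ 2 * δ := by
    rw [← CStarRing.norm_star_mul_self, e1]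
    exact aux_norm_two hpn hpd
  have n2 : ‖b * p - b‖ ≤ ε / 2 := by
    refine abs_le_of_sq_le_sq' ?_ (by positivity) |>.2
    rw [sq]; refine n1.trans_eq ?_
    rw [hδd]; ring
  have e2 : p * star b - star b = star (b * p - b) := by rw [star_sub, star_mul, hps]
  rw [dist_comm, dist_eq_norm, e2, norm_star]
  linarith

theorem aux_r_ideal [CompleteSpace A'] [StarModule ℂ A']
    [IsScalarTower ℂ A' A'] [SMulCommClass ℂ A' A'] (t : CStarBasicTriple E' A')
    (hfull : Dense
      ((Submodule.span ℂ {a : A' | ∃ x y : E', t.inner x y = a} : Submodule ℂ A') : Set A'))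
    (F : Set E') (hF : IsIdealTring t F) : IsClosedTwoSidedIdealAlg (rOf t F) := by
  obtain ⟨hc, h0, hadd, hsm, hmul, hst, hher⟩ := aux_r_hered t F hF.1
  obtain ⟨⟨fc, f0, fadd, fsm, hl⟩, hr⟩ := hF
  have hact : ∀ y ∈ F, ∀ a : A', t.act y a ∈ F := by
    intro y hy a
    refine aux_clo_ind (p := fun b => t.act y b ∈ F)
      (fc.preimage (aux_cont_right t y)) ?_ ?_ ?_ ?_ (hfull a)
    · rw [aux_act_zero_right]; exact f0
    · intro u v hu hv; rw [t.act_add_right]; exact fadd _ hu _ hv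
    · intro k u hu; rw [t.act_smul_right]; exact fsm _ _ hu
    · rintro _ ⟨u, v, rfl⟩
      exact hr _ hy _ _
  have hR : ∀ b ∈ rOf t F, ∀ a : A', b * a ∈ rOf t F := by
    intro b hb a
    refine aux_clo_ind (p := fun b => b * a ∈ rOf t F)
      (isClosed_closure.preimage (f := fun b => b * a) (by fun_prop)) ?_ ?_ ?_ ?_ hb
    · rw [zero_mul]; exact aux_clo_zero
    · intro x y hx hy; rw [add_mul]; exact aux_clo_add hx hy
    · intro k x hx; rw [smul_mul_assoc]; exact aux_clo_smul k hx
    · rintro _ ⟨x, hx, y, hy, rfl⟩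
      exact aux_clo_sub ⟨x, hx, t.act y a, hact y hy a, (t.inner_mul x y a).symm⟩
  refine ⟨hc, h0, hadd, hsm, fun a b hb => ⟨?_, hR b hb a⟩⟩
  have := hst _ (hR _ (hst _ hb) (star a))
  rwa [star_mul, star_star, star_star] at this

theorem aux_mod_ideal (t : CStarBasicTriple E' A') (B : Set A')
    (hB : IsClosedTwoSidedIdealAlg B) : IsIdealTring t (modOf t B) := by
  refine ⟨aux_mod_left t B, ?_⟩
  intro x hx y z
  refine aux_clo_ind (p := fun x => t.act x (t.inner y z) ∈ modOf t B)
    (isClosed_closure.preimage (aux_cont_left t _)) ?_ ?_ ?_ ?_ hx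
  · rw [aux_act_zero_left]; exact aux_clo_zero
  · intro u v hu hv; rw [t.act_add_left]; exact aux_clo_add hu hv
  · intro k u hu; rw [t.act_smul_left]; exact aux_clo_smul k hu
  · rintro _ ⟨u, b, hb, rfl⟩
    exact aux_clo_sub ⟨u, b * t.inner y z, (hB.2.2.2.2 _ b hb).2, (t.act_mul _ _ _).symm⟩

/-- Let `(E, A, ⟪·,·⟫)` be a full `C*`-basic triple.  Then
`F ↦ Fʳ` is an inclusion-preserving bijection from the left ideals of `E` onto
the hereditary `C*`-subalgebras of `A`, with inverse `B ↦ EB`, and it restricts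
to an inclusion-preserving bijection from the two-sided ideals of `E` onto the
closed two-sided ideals of `A`. -/
theorem stmt_19 {E A : Type*} [NormedAddCommGroup E] [NormedSpace ℂ E]
    [CompleteSpace E] [NonUnitalNormedRing A] [NormedSpace ℂ A] [StarRing A]
    [CStarRing A] [CompleteSpace A] [StarModule ℂ A]
    [IsScalarTower ℂ A A] [SMulCommClass ℂ A A]
    (t : CStarBasicTriple E A)
    (hfull : Dense
      ((Submodule.span ℂ {a : A | ∃ x y : E, t.inner x y = a} : Submodule ℂ A) :
        Set A)) :
    -- `F ↦ Fʳ` maps left ideals to hereditary subalgebras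
    (∀ F : Set E, IsLeftIdealTring t F → IsHereditarySubalg (rOf t F)) ∧
    -- `B ↦ EB` maps hereditary subalgebras to left ideals
    (∀ B : Set A, IsHereditarySubalg B → IsLeftIdealTring t (modOf t B)) ∧
    -- the two maps are mutually inverse
    (∀ F : Set E, IsLeftIdealTring t F → modOf t (rOf t F) = F) ∧
    (∀ B : Set A, IsHereditarySubalg B → rOf t (modOf t B) = B) ∧
    -- `F ↦ Fʳ` preserves and reflects inclusions
    (∀ F F' : Set E, IsLeftIdealTring t F → IsLeftIdealTring t F' →
      (F ⊆ F' ↔ rOf t F ⊆ rOf t F')) ∧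
    -- the restriction to two-sided ideals is a bijection onto the closed
    -- two-sided ideals of `A`
    (∀ F : Set E, IsIdealTring t F → IsClosedTwoSidedIdealAlg (rOf t F)) ∧
    (∀ B : Set A, IsClosedTwoSidedIdealAlg B →
      IsIdealTring t (modOf t B) ∧ rOf t (modOf t B) = B) := by
  refine ⟨aux_r_hered t, fun B _ => aux_mod_left t B, aux_mod_r t, aux_r_mod t hfull, ?_,
    aux_r_ideal t hfull, fun B hB => ⟨aux_mod_ideal t B hB,
      aux_r_mod t hfull B (aux_ideal_star B hB)⟩⟩
  intro F F' hF hF'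
  constructor
  · intro h
    refine closure_mono (Submodule.span_mono ?_)
    rintro _ ⟨x, hx, y, hy, rfl⟩
    exact ⟨x, h hx, y, h hy, rfl⟩
  · intro h
    rw [← aux_mod_r t F hF, ← aux_mod_r t F' hF']
    refine closure_mono (Submodule.span_mono ?_)
    rintro _ ⟨x, b, hb, rfl⟩
    exact ⟨x, b, h hb, rfl⟩

end Statement19
end
end
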